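/- arXiv:2009.10024 — 10 statements merged into one kernel-verified Lean document; each statement's English description precedes it below -/
import Mathlib

section
/- Let 𝒲 be a weakly exact structure on an additive category 𝒜. If i : A ⟶ B and j : B ⟶ C are morphisms of 𝒜 such that i admits a cokernel and the composite j ∘ i is an admissible monic of 𝒲, then i is an admissible monic of 𝒲 (Quillen's obscure axiom for weakly exact structures, monic version). -/
open CategoryTheory CategoryTheory.Limits ZeroObject

universe w v u

namespace WeaklyExactPaper

section Preamble

variable {C : Type u} [Category.{v} C] [Preadditive C] [HasZeroObject C] [HasBinaryBiproducts C]

/-- `(i, d)` is a kernel–cokernel pair: `i` is a kernel of `d` and `d` is a cokernel of `i`. -/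
structure IsKernelCokernelPair {A B Z : C} (i : A ⟶ B) (d : B ⟶ Z) : Prop where
  w : i ≫ d = 0
  isKernel : Nonempty (IsLimit (KernelFork.ofι i w))
  isCokernel : Nonempty (IsColimit (CokernelCofork.ofπ d w))

/-- Isomorphism of composable pairs `(i, d) ≅ (i', d')`. -/
def PairIso {A B Z A' B' Z' : C} (i : A ⟶ B) (d : B ⟶ Z) (i' : A' ⟶ B') (d' : B' ⟶ Z') : Prop :=
  ∃ (eA : A ≅ A') (eB : B ≅ B') (eZ : Z ≅ Z'),
    i ≫ eB.hom = eA.hom ≫ i' ∧ d ≫ eZ.hom = eB.hom ≫ d'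

/-- `f` is a kernel of some morphism. -/
def IsSomeKernel {A B : C} (f : A ⟶ B) : Prop :=
  ∃ (Z : C) (g : B ⟶ Z) (w : f ≫ g = 0), Nonempty (IsLimit (KernelFork.ofι f w))

/-- `g` is a cokernel of some morphism. -/
def IsSomeCokernel {B Z : C} (g : B ⟶ Z) : Prop :=
  ∃ (A : C) (f : A ⟶ B) (w : f ≫ g = 0), Nonempty (IsColimit (CokernelCofork.ofπ g w))

/-- `f` admits a cokernel. -/
def AdmitsCokernel {A B : C} (f : A ⟶ B) : Prop :=
  ∃ (Z : C) (g : B ⟶ Z) (w : f ≫ g = 0), Nonempty (IsColimit (CokernelCofork.ofπ g w))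

/-- `g` admits a kernel. -/
def AdmitsKernel {B Z : C} (g : B ⟶ Z) : Prop :=
  ∃ (A : C) (f : A ⟶ B) (w : f ≫ g = 0), Nonempty (IsLimit (KernelFork.ofι f w))

/-- A weakly exact structure on an additive category: a class of kernel–cokernel pairs,
closed under isomorphisms of composable pairs and binary direct sums, containing the pairs
`(1_X, X ⟶ 0)` and `(0 ⟶ X, 1_X)`, and satisfying the pushout axiom (E2) and the
pullback axiom (E2)ᵒᵖ. -/
structure WeaklyExactStructure (C : Type u) [Category.{v} C] [Preadditive C]
    [HasZeroObject C] [HasBinaryBiproducts C] where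
  W : ∀ ⦃A B Z : C⦄, (A ⟶ B) → (B ⟶ Z) → Prop
  kc_of_mem : ∀ {A B Z : C} {i : A ⟶ B} {d : B ⟶ Z}, W i d → IsKernelCokernelPair i d
  iso_closed : ∀ {A B Z A' B' Z' : C} {i : A ⟶ B} {d : B ⟶ Z} {i' : A' ⟶ B'} {d' : B' ⟶ Z'},
    W i d → PairIso i d i' d' → W i' d'
  sum_mem : ∀ {A₁ B₁ Z₁ A₂ B₂ Z₂ : C} {i₁ : A₁ ⟶ B₁} {d₁ : B₁ ⟶ Z₁} {i₂ : A₂ ⟶ B₂}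
    {d₂ : B₂ ⟶ Z₂}, W i₁ d₁ → W i₂ d₂ → W (biprod.map i₁ i₂) (biprod.map d₁ d₂)
  id_zero_mem : ∀ X : C, W (𝟙 X) (0 : X ⟶ (0 : C))
  zero_id_mem : ∀ X : C, W (0 : (0 : C) ⟶ X) (𝟙 X)
  pushout_mem : ∀ {A B Z A' : C} {i : A ⟶ B} {d : B ⟶ Z}, W i d → ∀ t : A ⟶ A',
    ∃ (S : C) (g : B ⟶ S) (i' : A' ⟶ S), IsPushout i t g i' ∧ ∃ (Z' : C) (d' : S ⟶ Z'), W i' d'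
  pullback_mem : ∀ {A B Z D : C} {i : A ⟶ B} {d : B ⟶ Z}, W i d → ∀ t : D ⟶ Z,
    ∃ (P : C) (p : P ⟶ B) (q : P ⟶ D), IsPullback p q d t ∧ ∃ (A'' : C) (i'' : A'' ⟶ P), W i'' q

/-- `i` is an admissible monic of `𝒲`. -/
def AdmissibleMonic (𝒲 : WeaklyExactStructure C) {A B : C} (i : A ⟶ B) : Prop :=
  ∃ (Z : C) (d : B ⟶ Z), 𝒲.W i d

/-- `d` is an admissible epic of `𝒲`. -/
def AdmissibleEpic (𝒲 : WeaklyExactStructure C) {B Z : C} (d : B ⟶ Z) : Prop :=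
  ∃ (A : C) (i : A ⟶ B), 𝒲.W i d

/-- `(i, d)` is a split kernel–cokernel pair. -/
def IsSplitPair {A B Z : C} (i : A ⟶ B) (d : B ⟶ Z) : Prop :=
  ∃ (X Y : C), PairIso (biprod.inl : X ⟶ X ⊞ Y) (biprod.snd : X ⊞ Y ⟶ Y) i d

end Preamble

section Statement

variable {C : Type u} [Category.{v} C] [Preadditive C] [HasZeroObject C] [HasBinaryBiproducts C]

/-- Quillen's obscure axiom for weakly exact structures, monic version. -/
theorem statement0 (𝒲 : WeaklyExactStructure C) {A B X : C} (i : A ⟶ B) (j : B ⟶ X)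
    (hcoker : AdmitsCokernel i) (hji : AdmissibleMonic 𝒲 (i ≫ j)) :
    AdmissibleMonic 𝒲 i := by
  obtain ⟨Z, k, wk, ⟨hk⟩⟩ := hcoker
  obtain ⟨Y, p, hW⟩ := hji
  obtain ⟨wf, ⟨hfk⟩, ⟨hpc⟩⟩ := 𝒲.kc_of_mem hW
  haveI : Epi k := ⟨fun a b h => Cofork.IsColimit.hom_ext hk h⟩
  haveI : Mono (i ≫ j) := ⟨fun a b h => Fork.IsLimit.hom_ext hfk h⟩
  haveI : Mono i := mono_of_mono i j
  have descK : ∀ {T : C} (x : B ⟶ T), i ≫ x = 0 → ∃ y : Z ⟶ T, k ≫ y = x := fun x h =>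
    ⟨_, (CokernelCofork.IsColimit.desc' hk x h).2⟩
  have descP : ∀ {T : C} (x : X ⟶ T), (i ≫ j) ≫ x = 0 → ∃ y : Y ⟶ T, p ≫ y = x := fun x h =>
    ⟨_, (CokernelCofork.IsColimit.desc' hpc x h).2⟩
  have liftF : ∀ {T : C} (x : T ⟶ X), x ≫ p = 0 → ∃ y : T ⟶ A, y ≫ (i ≫ j) = x := fun x h =>
    ⟨_, (KernelFork.IsLimit.lift' hfk x h).2⟩
  obtain ⟨u, hu⟩ := descK (j ≫ p) (by simpa using wf)
  obtain ⟨S, g, i', hS, Z', d', hW'⟩ := 𝒲.pushout_mem hW i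
  obtain ⟨wi', ⟨hi'k⟩, -⟩ := 𝒲.kc_of_mem hW'
  haveI : Mono i' := ⟨fun a b h => Fork.IsLimit.hom_ext hi'k h⟩
  obtain ⟨φ, hφ1, hφ2⟩ : ∃ φ : S ⟶ X, g ≫ φ = 𝟙 X ∧ i' ≫ φ = j :=
    ⟨hS.desc (𝟙 X) j (by simp), by simp, by simp⟩
  obtain ⟨ψ, hψ1, hψ2⟩ : ∃ ψ : S ⟶ Z, g ≫ ψ = 0 ∧ i' ≫ ψ = k :=
    ⟨hS.desc 0 k (by simp [wk]), by simp, by simp⟩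
  obtain ⟨e, he1, he2⟩ : ∃ e : S ⟶ Y, g ≫ e = p ∧ i' ≫ e = 0 :=
    ⟨hS.desc p 0 (by rw [wf, comp_zero]), by simp, by simp⟩
  obtain ⟨σ, hσ⟩ := descK (i' - j ≫ g) (by
    rw [Preadditive.comp_sub, ← hS.w, Category.assoc, sub_self])
  have hσψ : σ ≫ ψ = 𝟙 Z := by
    rw [← cancel_epi k, reassoc_of% hσ, Preadditive.sub_comp, Category.assoc, hψ1, hψ2]; simp
  have hσφ : σ ≫ φ = 0 := by
    rw [← cancel_epi k, reassoc_of% hσ, Preadditive.sub_comp, Category.assoc, hφ1, hφ2]; simp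
  have hσe : σ ≫ e = -u := by
    rw [← cancel_epi k, reassoc_of% hσ, Preadditive.sub_comp, Category.assoc, he1, he2]; simp [hu]
  have hid : 𝟙 S = φ ≫ g + ψ ≫ σ := by
    apply hS.hom_ext
    · simp [reassoc_of% hφ1, reassoc_of% hψ1]
    · simp [reassoc_of% hφ2, reassoc_of% hψ2, hσ]
  obtain ⟨c, hc⟩ := descP (g ≫ d') (by rw [← Category.assoc, hS.w, Category.assoc, wi', comp_zero])
  have hd' : d' = e ≫ c := by
    apply hS.hom_ext
    · rw [reassoc_of% he1, hc]
    · rw [reassoc_of% he2, wi', zero_comp]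
  have hext : ∀ {T : C} (a b : T ⟶ B), a ≫ j = b ≫ j → a ≫ k = b ≫ k → a = b := by
    intro T a b h1 h2
    rw [← cancel_mono i', ← Category.comp_id i', hid, Preadditive.comp_add, reassoc_of% hφ2,
      reassoc_of% hψ2, Preadditive.comp_add, Preadditive.comp_add, reassoc_of% h1, reassoc_of% h2]
  have hlift : ∀ {T : C} (s : T ⟶ X) (t : T ⟶ Z), s ≫ p = t ≫ u →
      ∃ y : T ⟶ B, y ≫ j = s ∧ y ≫ k = t := by
    intro T s t h
    obtain ⟨y, hy⟩ : ∃ y : T ⟶ B, y ≫ i' = s ≫ g + t ≫ σ :=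
      ⟨_, (KernelFork.IsLimit.lift' hi'k (s ≫ g + t ≫ σ) (by
        rw [hd', Preadditive.add_comp, Category.assoc, Category.assoc, reassoc_of% he1,
          reassoc_of% hσe, reassoc_of% h]; simp)).2⟩
    refine ⟨y, ?_, ?_⟩
    · rw [← hφ2, reassoc_of% hy]; simp [hφ1, hσφ]
    · rw [← hψ2, reassoc_of% hy]; simp [hψ1, hσψ]
  have hPB : IsPullback j k p u := by
    refine ⟨⟨hu.symm⟩, ⟨PullbackCone.IsLimit.mk _ (fun s => (hlift s.fst s.snd s.condition).choose)
      (fun s => (hlift s.fst s.snd s.condition).choose_spec.1)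
      (fun s => (hlift s.fst s.snd s.condition).choose_spec.2) ?_⟩⟩
    intro s m h1 h2
    exact hext _ _ (h1.trans (hlift s.fst s.snd s.condition).choose_spec.1.symm)
      (h2.trans (hlift s.fst s.snd s.condition).choose_spec.2.symm)
  obtain ⟨P, p', q, hP, A'', i'', hW''⟩ := 𝒲.pullback_mem hW u
  obtain ⟨wi'', ⟨hi''k⟩, -⟩ := 𝒲.kc_of_mem hW''
  haveI : Mono i'' := ⟨fun a b h => Fork.IsLimit.hom_ext hi''k h⟩
  let eB : P ≅ B := hP.isoIsPullback _ _ hPB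
  have heB2 : eB.hom ≫ k = q := hP.isoIsPullback_hom_snd _ _ hPB
  have heB2' : eB.inv ≫ q = k := by rw [← heB2, Iso.inv_hom_id_assoc]
  obtain ⟨a, ha⟩ : ∃ a : A'' ⟶ A, a ≫ i = i'' ≫ eB.hom := by
    have h0 : (i'' ≫ eB.hom) ≫ k = 0 := by rw [Category.assoc, heB2, wi'']
    obtain ⟨y, hy⟩ := liftF ((i'' ≫ eB.hom) ≫ j) (by
      rw [Category.assoc, ← hu, ← Category.assoc, h0, zero_comp])
    exact ⟨y, hext _ _ (by rw [Category.assoc, hy]) (by rw [h0, Category.assoc, wk, comp_zero])⟩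
  obtain ⟨b, hb⟩ : ∃ b : A ⟶ A'', b ≫ i'' = i ≫ eB.inv :=
    ⟨_, (KernelFork.IsLimit.lift' hi''k (i ≫ eB.inv) (by rw [Category.assoc, heB2', wk])).2⟩
  refine ⟨Z, k, 𝒲.iso_closed hW'' ⟨⟨a, b, ?_, ?_⟩, eB, Iso.refl _, ha.symm, ?_⟩⟩
  · rw [← cancel_mono i'', Category.assoc, hb, reassoc_of% ha]; simp
  · rw [← cancel_mono i, Category.assoc, ha, reassoc_of% hb]; simp
  · simp [heB2]

end Statement

end WeaklyExactPaper
end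

section
/- Let 𝒲 be a weakly exact structure on an additive category 𝒜. If f : X ⟶ Y and g : Y ⟶ Z are morphisms of 𝒜 such that g admits a kernel and the composite g ∘ f is an admissible epic of 𝒲, then g is an admissible epic of 𝒲 (Quillen's obscure axiom for weakly exact structures, epic version). -/
open CategoryTheory CategoryTheory.Limits ZeroObject

universe w v u

namespace WeaklyExactPaper

section Statement

variable {C : Type u} [Category.{v} C] [Preadditive C] [HasZeroObject C] [HasBinaryBiproducts C]

/-- Quillen's obscure axiom for weakly exact structures, epic version. -/
theorem statement1 (𝒲 : WeaklyExactStructure C) {X Y Z : C} (f : X ⟶ Y) (g : Y ⟶ Z)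
    (hker : AdmitsKernel g) (hgf : AdmissibleEpic 𝒲 (f ≫ g)) :
    AdmissibleEpic 𝒲 g := by
  obtain ⟨K, k, wk, ⟨hk⟩⟩ := hker
  obtain ⟨A, i, hW⟩ := hgf
  obtain ⟨wi, ⟨hi⟩, ⟨hci⟩⟩ := 𝒲.kc_of_mem hW
  have kmono : Mono k := mono_of_isLimit_fork hk
  have fgepi : Epi (f ≫ g) := epi_of_isColimit_cofork hci
  have gepi : Epi g := epi_of_epi f g
  obtain ⟨P, p, q, hP, A', i', hW'⟩ := 𝒲.pullback_mem hW g
  obtain ⟨wi', -, ⟨hcq⟩⟩ := 𝒲.kc_of_mem hW'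
  have qepi : Epi q := epi_of_isColimit_cofork hcq
  have liftK : ∀ {T : C} (t : T ⟶ Y), t ≫ g = 0 → ∃ l : T ⟶ K, l ≫ k = t := fun t ht =>
    ⟨_, (KernelFork.IsLimit.lift' hk t ht).2⟩
  have liftA : ∀ {T : C} (t : T ⟶ X), t ≫ f ≫ g = 0 → ∃ l : T ⟶ A, l ≫ i = t := fun t ht =>
    ⟨_, (KernelFork.IsLimit.lift' hi t ht).2⟩
  obtain ⟨u, hu⟩ := liftK (i ≫ f) (by simpa using wi)
  obtain ⟨r, hr⟩ := liftK (q - p ≫ f) (by simp [← hP.w])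
  obtain ⟨c, hc⟩ := liftA (i' ≫ p) (by rw [Category.assoc, hP.w, ← Category.assoc, wi', zero_comp])
  have hir : i' ≫ r = -(c ≫ u) := by
    rw [← cancel_mono k]
    simp only [Category.assoc, hr, hu, Preadditive.comp_sub, wi', Preadditive.neg_comp]
    rw [← Category.assoc c, hc]; simp
  let s : X ⟶ P := hP.lift (𝟙 X) f (by simp)
  have sp : s ≫ p = 𝟙 X := hP.lift_fst _ _ _
  have sq : s ≫ q = f := hP.lift_snd _ _ _
  have sr : s ≫ r = 0 := by
    rw [← cancel_mono k]
    simp [hr, Preadditive.comp_sub, sq, reassoc_of% sp]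
  let m : K ⟶ P := hP.lift 0 k (by simp [wk])
  have mp : m ≫ p = 0 := hP.lift_fst _ _ _
  have mq : m ≫ q = k := hP.lift_snd _ _ _
  have mr : m ≫ r = 𝟙 K := by
    rw [← cancel_mono k]
    simp [hr, Preadditive.comp_sub, mq, reassoc_of% mp]
  have jepi : ∀ {T : C} (x y : Y ⟶ T), f ≫ x = f ≫ y → k ≫ x = k ≫ y → x = y := by
    intro T x y h1 h2
    rw [← cancel_epi q]
    have hq : q = p ≫ f + r ≫ k := by rw [hr]; abel
    rw [hq]
    simp [Preadditive.add_comp, h1, h2]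
  have desc : ∀ {T : C} (a : X ⟶ T) (b : K ⟶ T), i ≫ a = u ≫ b →
      ∃ l : Y ⟶ T, f ≫ l = a ∧ k ≫ l = b := by
    intro T a b hab
    obtain ⟨l, hl⟩ := CokernelCofork.IsColimit.desc' hcq (p ≫ a + r ≫ b) (by
      rw [Preadditive.comp_add, ← Category.assoc, ← Category.assoc, ← hc, hir]
      simp [hab])
    replace hl : q ≫ l = p ≫ a + r ≫ b := hl
    refine ⟨l, ?_, ?_⟩
    · rw [← sq, Category.assoc, hl, Preadditive.comp_add, reassoc_of% sp, reassoc_of% sr]; simp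
    · rw [← mq, Category.assoc, hl, Preadditive.comp_add, reassoc_of% mp, reassoc_of% mr]; simp
  obtain ⟨S, g₁, j, hS, Z', d, hd⟩ := 𝒲.pushout_mem hW u
  obtain ⟨wd, -, ⟨hcd⟩⟩ := 𝒲.kc_of_mem hd
  have depi : Epi d := epi_of_isColimit_cofork hcd
  obtain ⟨l, hl1, hl2⟩ := desc g₁ j hS.w
  let e : S ⟶ Y := hS.desc f k hu.symm
  have e1 : g₁ ≫ e = f := hS.inl_desc _ _ _
  have e2 : j ≫ e = k := hS.inr_desc _ _ _
  have el : e ≫ l = 𝟙 S := by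
    apply hS.hom_ext
    · rw [reassoc_of% e1, hl1, Category.comp_id]
    · rw [reassoc_of% e2, hl2, Category.comp_id]
  have le : l ≫ e = 𝟙 Y := by
    apply jepi
    · rw [reassoc_of% hl1, e1, Category.comp_id]
    · rw [reassoc_of% hl2, e2, Category.comp_id]
  obtain ⟨z, hz⟩ := CokernelCofork.IsColimit.desc' hcd (e ≫ g) (by rw [reassoc_of% e2, wk])
  replace hz : d ≫ z = e ≫ g := hz
  obtain ⟨y, hy⟩ := CokernelCofork.IsColimit.desc' hci (f ≫ l ≫ d) (by
    rw [← reassoc_of% hu, reassoc_of% hl2, wd, comp_zero])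
  replace hy : (f ≫ g) ≫ y = f ≫ l ≫ d := hy
  have gy : g ≫ y = l ≫ d := by
    apply jepi
    · simpa using hy
    · rw [reassoc_of% wk, reassoc_of% hl2, wd, zero_comp]
  refine ⟨K, k, 𝒲.iso_closed hd ⟨Iso.refl _, ⟨e, l, el, le⟩, ⟨z, y, ?_, ?_⟩, ?_, hz⟩⟩
  · rw [← cancel_epi d, reassoc_of% hz, gy, reassoc_of% el, Category.comp_id]
  · rw [← cancel_epi g, reassoc_of% gy, hz, reassoc_of% le, Category.comp_id]
  · simpa using e2

end Statement

end WeaklyExactPaper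
end

section
/- Let 𝒲 be a weakly exact structure on an additive category 𝒜, let i : A ⟶ B and i' : A' ⟶ B' be admissible monics of 𝒲, and let f : A ⟶ A' and f' : B ⟶ B' be morphisms with i' ∘ f = f' ∘ i. Then the following statements are equivalent: (i) the commutative square with sides i, f, f', i' is a pushout; (ii) the pair consisting of the morphism A ⟶ B ⊕ A' with components (i, −f) followed by the morphism B ⊕ A' ⟶ B' with components (f', i') is a kernel–cokernel pair belonging to 𝒲; (iii) the square is bicartesian, i.e. both a pushout and a pullback; (iv) there exist morphisms p : B ⟶ C and p' : B' ⟶ C such that (i, p) ∈ 𝒲, (i', p') ∈ 𝒲 and p' ∘ f' = p. -/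
open CategoryTheory CategoryTheory.Limits ZeroObject

universe w v u

namespace WeaklyExactPaper

section Helpers

variable {C : Type u} [Category.{v} C] [Preadditive C] [HasZeroObject C] [HasBinaryBiproducts C]

lemma W_of_isColimit (𝒲 : WeaklyExactStructure C) {A B Z Z' : C} {i : A ⟶ B} {d : B ⟶ Z}
    (h : 𝒲.W i d) (d' : B ⟶ Z') (w : i ≫ d' = 0)
    (hd' : IsColimit (CokernelCofork.ofπ d' w)) : 𝒲.W i d' := by
  obtain ⟨hc⟩ := (𝒲.kc_of_mem h).isCokernel
  refine 𝒲.iso_closed h ⟨Iso.refl _, Iso.refl _, hc.coconePointUniqueUpToIso hd', by simp, ?_⟩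
  have := hc.comp_coconePointUniqueUpToIso_hom hd' WalkingParallelPair.one
  simpa using this

lemma W_of_isLimit (𝒲 : WeaklyExactStructure C) {A A' B Z : C} {i : A ⟶ B} {d : B ⟶ Z}
    (h : 𝒲.W i d) (i' : A' ⟶ B) (w : i' ≫ d = 0)
    (hi' : IsLimit (KernelFork.ofι i' w)) : 𝒲.W i' d := by
  obtain ⟨hc⟩ := (𝒲.kc_of_mem h).isKernel
  refine 𝒲.iso_closed h ⟨hc.conePointUniqueUpToIso hi', Iso.refl _, Iso.refl _, ?_, by simp⟩
  have := hc.conePointUniqueUpToIso_hom_comp hi' WalkingParallelPair.zero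
  simpa using this.symm

lemma exists_lift_of_kc {A B Z : C} {i : A ⟶ B} {d : B ⟶ Z} (h : IsKernelCokernelPair i d)
    {T : C} (x : T ⟶ B) (hx : x ≫ d = 0) : ∃ z : T ⟶ A, z ≫ i = x := by
  obtain ⟨hk⟩ := h.isKernel
  obtain ⟨l, hl⟩ := KernelFork.IsLimit.lift' hk x hx
  exact ⟨l, hl⟩

lemma exists_desc_of_kc {A B Z : C} {i : A ⟶ B} {d : B ⟶ Z} (h : IsKernelCokernelPair i d)
    {T : C} (x : B ⟶ T) (hx : i ≫ x = 0) : ∃ z : Z ⟶ T, d ≫ z = x := by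
  obtain ⟨hk⟩ := h.isCokernel
  obtain ⟨l, hl⟩ := CokernelCofork.IsColimit.desc' hk x hx
  exact ⟨l, hl⟩

lemma mono_of_kc {A B Z : C} {i : A ⟶ B} {d : B ⟶ Z} (h : IsKernelCokernelPair i d) : Mono i := by
  obtain ⟨hk⟩ := h.isKernel
  exact ⟨fun a b hab => Fork.IsLimit.hom_ext hk hab⟩

lemma epi_of_kc {A B Z : C} {i : A ⟶ B} {d : B ⟶ Z} (h : IsKernelCokernelPair i d) : Epi d := by
  obtain ⟨hk⟩ := h.isCokernel
  exact ⟨fun a b hab => Cofork.IsColimit.hom_ext hk hab⟩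

lemma step_one (𝒲 : WeaklyExactStructure C) {A B A' B' : C}
    (i : A ⟶ B) (i' : A' ⟶ B') (f : A ⟶ A') (f' : B ⟶ B')
    (hi : AdmissibleMonic 𝒲 i) (hi' : AdmissibleMonic 𝒲 i') (hp : IsPushout i f f' i') :
    ∃ (Z : C) (p : B ⟶ Z) (p' : B' ⟶ Z), 𝒲.W i p ∧ 𝒲.W i' p' ∧ f' ≫ p' = p := by
  obtain ⟨Z, p, hW⟩ := hi
  obtain ⟨Z', q, hW'⟩ := hi'
  have kc := 𝒲.kc_of_mem hW
  have w : i ≫ p = f ≫ (0 : A' ⟶ Z) := by rw [kc.w, comp_zero]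
  have e1 : f' ≫ hp.desc p 0 w = p := hp.inl_desc _ _ _
  have e2 : i' ≫ hp.desc p 0 w = 0 := hp.inr_desc _ _ _
  haveI := epi_of_kc kc
  haveI : Epi (hp.desc p 0 w) := by
    haveI : Epi (f' ≫ hp.desc p 0 w) := by rw [e1]; infer_instance
    exact epi_of_epi f' _
  refine ⟨Z, p, hp.desc p 0 w, hW, W_of_isColimit 𝒲 hW' _ e2 ?_, e1⟩
  have key : ∀ {T : C} (x : B' ⟶ T), i' ≫ x = 0 → ∃ z, hp.desc p 0 w ≫ z = x := by
    intro T x hx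
    obtain ⟨z, hz⟩ := exists_desc_of_kc kc (f' ≫ x) (by rw [hp.w_assoc, hx, comp_zero])
    refine ⟨z, hp.hom_ext ?_ ?_⟩
    · rw [← Category.assoc, e1, hz]
    · rw [← Category.assoc, e2, hx, zero_comp]
  choose g hg using @key
  exact CokernelCofork.IsColimit.ofπ _ _ g hg
    (fun x hx m hm => by rw [← cancel_epi (hp.desc p 0 w), hm, hg])

lemma step_two (𝒲 : WeaklyExactStructure C) {A B A' B' Z : C}
    (i : A ⟶ B) (i' : A' ⟶ B') (f : A ⟶ A') (f' : B ⟶ B') (hcomm : i ≫ f' = f ≫ i')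
    (p : B ⟶ Z) (p' : B' ⟶ Z) (h : 𝒲.W i p) (h' : 𝒲.W i' p') (hf : f' ≫ p' = p) :
    𝒲.W (biprod.lift i (-f)) (biprod.desc f' i') := by
  have kc := 𝒲.kc_of_mem h
  have kc' := 𝒲.kc_of_mem h'
  haveI := mono_of_kc kc
  haveI := mono_of_kc kc'
  obtain ⟨P, a, b, hP, K, k, hk⟩ := 𝒲.pullback_mem h p'
  have hw : (biprod.fst : B ⊞ A' ⟶ B) ≫ p = biprod.desc f' i' ≫ p' := by
    apply biprod.hom_ext' <;> simp [hf, kc'.w]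
  obtain ⟨z, hz⟩ := exists_lift_of_kc kc' (b - a ≫ f') (by
    rw [Preadditive.sub_comp, Category.assoc, hf, hP.w, sub_self])
  have hcol : 𝒲.W (k ≫ biprod.lift a z) (biprod.desc f' i') := by
    refine 𝒲.iso_closed hk ⟨Iso.refl _, ⟨biprod.lift a z, hP.lift _ _ hw, ?_, ?_⟩, Iso.refl _,
      by simp, ?_⟩
    · apply hP.hom_ext
      · simp
      · simp [hz]
    · apply biprod.hom_ext
      · simp
      · rw [← cancel_mono i']
        simp only [Category.assoc, biprod.lift_snd, hz, Preadditive.comp_sub, hP.lift_snd,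
          hP.lift_fst_assoc, Category.id_comp]
        apply biprod.hom_ext' <;> simp
    · simp [hz]
  refine W_of_isLimit 𝒲 hcol _ (by simp [hcomm]) ?_
  have key : ∀ {T : C} (x : T ⟶ B ⊞ A'), x ≫ biprod.desc f' i' = 0 →
      ∃ z, z ≫ biprod.lift i (-f) = x := by
    intro T x hx
    have hx' : (x ≫ biprod.fst) ≫ f' + (x ≫ biprod.snd) ≫ i' = 0 := by
      rw [← hx, biprod.desc_eq]; simp
    obtain ⟨y, hy⟩ := exists_lift_of_kc kc (x ≫ biprod.fst) (by
      rw [Category.assoc, hw, reassoc_of% hx, zero_comp])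
    refine ⟨y, biprod.hom_ext _ _ (by simpa using hy) ?_⟩
    rw [← cancel_mono i']
    rw [← hy, Category.assoc, hcomm] at hx'
    simp only [Category.assoc, biprod.lift_snd, Preadditive.neg_comp, Preadditive.comp_neg] at hx' ⊢
    exact neg_eq_of_add_eq_zero_right hx'
  choose g hg using @key
  exact KernelFork.IsLimit.ofι _ _ g hg (fun x hx m hm => by
    rw [← cancel_mono i]
    have h1 := congrArg (· ≫ biprod.fst) (hm.trans (hg x hx).symm)
    simpa using h1)

lemma step_three {A B A' B' : C}
    (i : A ⟶ B) (i' : A' ⟶ B') (f : A ⟶ A') (f' : B ⟶ B') (hcomm : i ≫ f' = f ≫ i')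
    (h : IsKernelCokernelPair (biprod.lift i (-f)) (biprod.desc f' i')) :
    IsPushout i f f' i' ∧ IsPullback i f f' i' := by
  haveI := mono_of_kc h
  haveI := epi_of_kc h
  constructor
  · have key : ∀ s : PushoutCocone i f, ∃ z, biprod.desc f' i' ≫ z = biprod.desc s.inl s.inr :=
      fun s => exists_desc_of_kc h _ (by simp [s.condition])
    choose g hg using key
    refine ⟨⟨hcomm⟩, ⟨PushoutCocone.IsColimit.mk _ g ?_ ?_ ?_⟩⟩
    · intro s; simpa using congrArg (biprod.inl ≫ ·) (hg s)
    · intro s; simpa using congrArg (biprod.inr ≫ ·) (hg s)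
    · intro s m h1 h2
      rw [← cancel_epi (biprod.desc f' i'), hg]
      apply biprod.hom_ext' <;> simp [h1, h2]
  · have key : ∀ s : PullbackCone f' i', ∃ z, z ≫ biprod.lift i (-f) = biprod.lift s.fst (-s.snd) :=
      fun s => exists_lift_of_kc h _ (by simp [s.condition])
    choose g hg using key
    refine ⟨⟨hcomm⟩, ⟨PullbackCone.IsLimit.mk _ g ?_ ?_ ?_⟩⟩
    · intro s; simpa using congrArg (· ≫ biprod.fst) (hg s)
    · intro s; simpa using congrArg (· ≫ biprod.snd) (hg s)
    · intro s m h1 h2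
      rw [← cancel_mono (biprod.lift i (-f)), hg]
      apply biprod.hom_ext <;> simp [h1, h2]

end Helpers

section Statement

variable {C : Type u} [Category.{v} C] [Preadditive C] [HasZeroObject C] [HasBinaryBiproducts C]

/-- Characterisations of pushout squares along two admissible monics
(weakly exact version of Bühler's Proposition 2.12). -/
theorem statement2 (𝒲 : WeaklyExactStructure C) {A B A' B' : C}
    (i : A ⟶ B) (i' : A' ⟶ B') (f : A ⟶ A') (f' : B ⟶ B')
    (hi : AdmissibleMonic 𝒲 i) (hi' : AdmissibleMonic 𝒲 i')
    (hcomm : i ≫ f' = f ≫ i') :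
    (IsPushout i f f' i' ↔ 𝒲.W (biprod.lift i (-f)) (biprod.desc f' i')) ∧
    (IsPushout i f f' i' ↔ (IsPushout i f f' i' ∧ IsPullback i f f' i')) ∧
    (IsPushout i f f' i' ↔
      ∃ (Z : C) (p : B ⟶ Z) (p' : B' ⟶ Z), 𝒲.W i p ∧ 𝒲.W i' p' ∧ f' ≫ p' = p) := by
  have a := step_one 𝒲 i i' f f' hi hi'
  have b : (∃ (Z : C) (p : B ⟶ Z) (p' : B' ⟶ Z), 𝒲.W i p ∧ 𝒲.W i' p' ∧ f' ≫ p' = p) →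
      𝒲.W (biprod.lift i (-f)) (biprod.desc f' i') := by
    rintro ⟨Z, p, p', h, h', hf⟩
    exact step_two 𝒲 i i' f f' hcomm p p' h h' hf
  have c : 𝒲.W (biprod.lift i (-f)) (biprod.desc f' i') →
      IsPushout i f f' i' ∧ IsPullback i f f' i' :=
    fun h => step_three i i' f f' hcomm (𝒲.kc_of_mem h)
  exact ⟨⟨fun h => b (a h), fun h => (c h).1⟩, ⟨fun h => c (b (a h)), fun h => h.1⟩,
    ⟨a, fun h => (c (b h)).1⟩⟩

end Statement

end WeaklyExactPaper
end

section
/- Let 𝒲 be a weakly exact structure on an additive category 𝒜 and let (a, b, c) be a morphism of admissible short exact sequences from (i : A ⟶ B, p : B ⟶ C) ∈ 𝒲 to (i' : A' ⟶ B', p' : B' ⟶ C') ∈ 𝒲, i.e. i' ∘ a = b ∘ i and p' ∘ b = c ∘ p. Then there exist a pair (j : A' ⟶ E, q : E ⟶ C) ∈ 𝒲 and morphisms b₁ : B ⟶ E and b₂ : E ⟶ B' such that b = b₂ ∘ b₁, j ∘ a = b₁ ∘ i, q ∘ b₁ = p, b₂ ∘ j = i', p' ∘ b₂ = c ∘ q,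 the commutative square with sides i, a, b₁, j is bicartesian, and the commutative square with sides q, b₂, c, p' is bicartesian. -/
open CategoryTheory CategoryTheory.Limits ZeroObject

universe w v u

namespace WeaklyExactPaper

section Statement

variable {C : Type u} [Category.{v} C] [Preadditive C] [HasZeroObject C] [HasBinaryBiproducts C]

namespace IsKernelCokernelPair

variable {A B Z : C} {i : A ⟶ B} {d : B ⟶ Z}

theorem exLift (h : IsKernelCokernelPair i d) {T : C} (x : T ⟶ B) (hx : x ≫ d = 0) :
    ∃ l : T ⟶ A, l ≫ i = x := by
  obtain ⟨H⟩ := h.isKernel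
  exact ⟨H.lift (KernelFork.ofι x hx), H.fac (KernelFork.ofι x hx) WalkingParallelPair.zero⟩

theorem exDesc (h : IsKernelCokernelPair i d) {T : C} (x : B ⟶ T) (hx : i ≫ x = 0) :
    ∃ l : Z ⟶ T, d ≫ l = x := by
  obtain ⟨H⟩ := h.isCokernel
  exact ⟨H.desc (CokernelCofork.ofπ x hx), H.fac (CokernelCofork.ofπ x hx) WalkingParallelPair.one⟩

theorem mono (h : IsKernelCokernelPair i d) : Mono i := by
  obtain ⟨H⟩ := h.isKernel
  exact ⟨fun f g e => Fork.IsLimit.hom_ext H e⟩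

theorem epi (h : IsKernelCokernelPair i d) : Epi d := by
  obtain ⟨H⟩ := h.isCokernel
  exact ⟨fun f g e => Cofork.IsColimit.hom_ext H e⟩

end IsKernelCokernelPair

/-- Every morphism of admissible short exact sequences of a weakly exact structure factors
through an admissible short exact sequence, with bicartesian top-left and bottom-right
squares. -/
theorem statement3 (𝒲 : WeaklyExactStructure C)
    {A B Z A' B' Z' : C} {i : A ⟶ B} {p : B ⟶ Z} {i' : A' ⟶ B'} {p' : B' ⟶ Z'}
    (h : 𝒲.W i p) (h' : 𝒲.W i' p')
    (a : A ⟶ A') (b : B ⟶ B') (c : Z ⟶ Z')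
    (hsq1 : a ≫ i' = i ≫ b) (hsq2 : b ≫ p' = p ≫ c) :
    ∃ (E : C) (j : A' ⟶ E) (q : E ⟶ Z), 𝒲.W j q ∧
      ∃ (b₁ : B ⟶ E) (b₂ : E ⟶ B'),
        b = b₁ ≫ b₂ ∧ a ≫ j = i ≫ b₁ ∧ b₁ ≫ q = p ∧ j ≫ b₂ = i' ∧ b₂ ≫ p' = q ≫ c ∧
        IsPushout i a b₁ j ∧ IsPullback i a b₁ j ∧
        IsPushout q b₂ c p' ∧ IsPullback q b₂ c p' := by
  have k := 𝒲.kc_of_mem h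
  have k' := 𝒲.kc_of_mem h'
  have := k.mono
  have := k.epi
  have := k'.mono
  have := k'.epi
  obtain ⟨E, b₁, j, hpo, Y, d, hd⟩ := 𝒲.pushout_mem h a
  have kd := 𝒲.kc_of_mem hd
  have := kd.mono
  have := kd.epi
  obtain ⟨q, hq₁, hq₂⟩ : ∃ q : E ⟶ Z, b₁ ≫ q = p ∧ j ≫ q = 0 :=
    ⟨hpo.desc p 0 (by simp [k.w]), hpo.inl_desc _ _ _, hpo.inr_desc _ _ _⟩
  obtain ⟨b₂, hb₁, hb₂⟩ : ∃ b₂ : E ⟶ B', b₁ ≫ b₂ = b ∧ j ≫ b₂ = i' :=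
    ⟨hpo.desc b i' hsq1.symm, hpo.inl_desc _ _ _, hpo.inr_desc _ _ _⟩
  have hqc : b₂ ≫ p' = q ≫ c := by
    apply hpo.hom_ext
    · rw [reassoc_of% hb₁, reassoc_of% hq₁, hsq2]
    · rw [reassoc_of% hb₂, reassoc_of% hq₂, k'.w, zero_comp]
  have : Epi q := by
    have : Epi (b₁ ≫ q) := by rw [hq₁]; infer_instance
    exact epi_of_epi b₁ q
  obtain ⟨φ, hφ⟩ := kd.exDesc q hq₂
  obtain ⟨ψ, hψ⟩ := k.exDesc (b₁ ≫ d) (by rw [reassoc_of% hpo.w, kd.w, comp_zero])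
  have hqψ : q ≫ ψ = d := by
    apply hpo.hom_ext
    · rw [reassoc_of% hq₁, hψ]
    · rw [reassoc_of% hq₂, kd.w, zero_comp]
  have hW : 𝒲.W j q := by
    refine 𝒲.iso_closed hd ⟨Iso.refl _, Iso.refl _, ⟨φ, ψ, ?_, ?_⟩, ?_, ?_⟩
    · rw [← cancel_epi d, reassoc_of% hφ, hqψ, Category.comp_id]
    · rw [← cancel_epi q, reassoc_of% hqψ, hφ, Category.comp_id]
    · simp
    · simp [hφ]
  have kq := 𝒲.kc_of_mem hW
  refine ⟨E, j, q, hW, b₁, b₂, hb₁.symm, hpo.w.symm, hq₁, hb₂, hqc, hpo, ?_, ?_, ?_⟩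
  · refine ⟨hpo.toCommSq, ⟨PullbackCone.isLimitAux' _ fun s => ?_⟩⟩
    have hs := s.condition
    have h0 : s.fst ≫ p = 0 := by
      rw [← hq₁, reassoc_of% hs, hq₂, comp_zero]
    have hl := (k.exLift s.fst h0).choose_spec
    refine ⟨(k.exLift s.fst h0).choose, hl, ?_, ?_⟩
    · change _ ≫ a = _
      rw [← cancel_mono j, Category.assoc, ← hpo.w, reassoc_of% hl, hs]
    · intro m hm _
      exact (cancel_mono i).1 (Eq.trans hm hl.symm)
  · refine ⟨⟨hqc.symm⟩, ⟨PushoutCocone.isColimitAux' _ fun s => ?_⟩⟩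
    have hs := s.condition
    have h0 : i' ≫ s.inr = 0 := by
      rw [← hb₂, Category.assoc, ← hs, reassoc_of% hq₂, zero_comp]
    have hl := (k'.exDesc s.inr h0).choose_spec
    refine ⟨(k'.exDesc s.inr h0).choose, ?_, hl, ?_⟩
    · change c ≫ _ = _
      rw [← cancel_epi q, ← reassoc_of% hqc, hl, hs]
    · intro m _ hm
      exact (cancel_epi p').1 (Eq.trans hm hl.symm)
  · have key : ∀ {T : C} (x : T ⟶ Z) (y : T ⟶ B'), x ≫ c = y ≫ p' →
        ∃ l : T ⟶ E, l ≫ q = x ∧ l ≫ b₂ = y := by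
      intro T x y hxy
      obtain ⟨P, e, t, hpb, A₂, κ, hκ⟩ := 𝒲.pullback_mem hW x
      have kt := 𝒲.kc_of_mem hκ
      have := kt.epi
      have hpw : e ≫ q = t ≫ x := hpb.w
      obtain ⟨r, hr⟩ := k'.exLift (e ≫ b₂ - t ≫ y) (by
        rw [Preadditive.sub_comp, Category.assoc, Category.assoc, hqc, ← hxy,
          reassoc_of% hpw, sub_self])
      obtain ⟨s, hs⟩ := kq.exLift (κ ≫ e) (by
        rw [Category.assoc, hpw, reassoc_of% kt.w, zero_comp])
      have hsr : κ ≫ r = s := by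
        rw [← cancel_mono i', Category.assoc, hr, Preadditive.comp_sub, reassoc_of% kt.w,
          zero_comp, sub_zero, ← hb₂, reassoc_of% hs]
      obtain ⟨l, hl⟩ := kt.exDesc (e - r ≫ j) (by
        rw [Preadditive.comp_sub, reassoc_of% hsr, hs, sub_self])
      refine ⟨l, ?_, ?_⟩
      · rw [← cancel_epi t, reassoc_of% hl, Preadditive.sub_comp, Category.assoc, hq₂,
          comp_zero, sub_zero, hpw]
      · rw [← cancel_epi t, reassoc_of% hl, Preadditive.sub_comp, Category.assoc, hb₂, hr,
          sub_sub_cancel]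
    have uniq : ∀ {T : C} (m l : T ⟶ E), m ≫ q = l ≫ q → m ≫ b₂ = l ≫ b₂ → m = l := by
      intro T m l h₁ h₂
      rw [← sub_eq_zero]
      obtain ⟨n, hn⟩ := kq.exLift (m - l) (by rw [Preadditive.sub_comp, h₁, sub_self])
      have hn0 : n = 0 := by
        rw [← cancel_mono i', zero_comp, ← hb₂, reassoc_of% hn, Preadditive.sub_comp, h₂,
          sub_self]
      rw [← hn, hn0, zero_comp]
    refine ⟨⟨hqc.symm⟩, ⟨PullbackCone.isLimitAux' _ fun s => ?_⟩⟩
    have hl := (key s.fst s.snd s.condition).choose_spec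
    refine ⟨(key s.fst s.snd s.condition).choose, hl.1, hl.2, ?_⟩
    intro m hm₁ hm₂
    exact uniq _ _ (Eq.trans hm₁ hl.1.symm) (Eq.trans hm₂ hl.2.symm)

end Statement

end WeaklyExactPaper
end

section
/- Let 𝒜 be an additive category, let 𝓘 be a right weakly exact structure on 𝒜 and let 𝓓 be a left weakly exact structure on 𝒜. Then the class 𝒲 of all kernel–cokernel pairs (i, d) with i ∈ 𝓘 and d ∈ 𝓓 is a weakly exact structure on 𝒜. -/
open CategoryTheory CategoryTheory.Limits ZeroObject

universe w v u

namespace WeaklyExactPaper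

section OneSided

variable {C : Type u} [Category.{v} C] [Preadditive C] [HasZeroObject C] [HasBinaryBiproducts C]

/-- A right weakly exact structure: a class of kernels closed under isomorphisms, containing
identities and zero monomorphisms `0 ⟶ X`, closed under pushouts (P), satisfying the
cancellation axiom (Q) and closed under direct sums (S). -/
structure RightWeaklyExactStructure (C : Type u) [Category.{v} C] [Preadditive C]
    [HasZeroObject C] [HasBinaryBiproducts C] where
  I : ∀ ⦃A B : C⦄, (A ⟶ B) → Prop
  ker_of_mem : ∀ {A B : C} {f : A ⟶ B}, I f → IsSomeKernel f
  iso_closed : ∀ {A B A' B' : C} {f : A ⟶ B} {f' : A' ⟶ B'} (eA : A ≅ A') (eB : B ≅ B'),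
    f ≫ eB.hom = eA.hom ≫ f' → I f → I f'
  id_mem : ∀ X : C, I (𝟙 X)
  zero_mem : ∀ X : C, I (0 : (0 : C) ⟶ X)
  pushout_mem : ∀ {X Y X' : C} {f : X ⟶ Y}, I f → ∀ h : X ⟶ X',
    ∃ (Y' : C) (h' : Y ⟶ Y') (f' : X' ⟶ Y'), IsPushout f h h' f' ∧ I f'
  cancel_mem : ∀ {A B Z : C} (a : A ⟶ B) (b : B ⟶ Z), I (a ≫ b) → AdmitsCokernel a → I a
  sum_mem : ∀ {A B A' B' : C} {f : A ⟶ B} {f' : A' ⟶ B'}, I f → I f' → I (biprod.map f f')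

/-- A left weakly exact structure: a class of cokernels closed under isomorphisms, containing
identities and zero epimorphisms `X ⟶ 0`, closed under pullbacks (Pᵒᵖ), satisfying the
cancellation axiom (Qᵒᵖ) and closed under direct sums (Sᵒᵖ). -/
structure LeftWeaklyExactStructure (C : Type u) [Category.{v} C] [Preadditive C]
    [HasZeroObject C] [HasBinaryBiproducts C] where
  D : ∀ ⦃B Z : C⦄, (B ⟶ Z) → Prop
  coker_of_mem : ∀ {B Z : C} {g : B ⟶ Z}, D g → IsSomeCokernel g
  iso_closed : ∀ {B Z B' Z' : C} {g : B ⟶ Z} {g' : B' ⟶ Z'} (eB : B ≅ B') (eZ : Z ≅ Z'),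
    g ≫ eZ.hom = eB.hom ≫ g' → D g → D g'
  id_mem : ∀ X : C, D (𝟙 X)
  zero_mem : ∀ X : C, D (0 : X ⟶ (0 : C))
  pullback_mem : ∀ {B Z E : C} {f : B ⟶ Z}, D f → ∀ h : E ⟶ Z,
    ∃ (P : C) (p : P ⟶ B) (e : P ⟶ E), IsPullback p e f h ∧ D e
  cancel_mem : ∀ {A B Z : C} (a : A ⟶ B) (b : B ⟶ Z), D (a ≫ b) → AdmitsKernel b → D b
  sum_mem : ∀ {B Z B' Z' : C} {g : B ⟶ Z} {g' : B' ⟶ Z'}, D g → D g' → D (biprod.map g g')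

end OneSided

section Statement

variable {C : Type u} [Category.{v} C] [Preadditive C] [HasZeroObject C] [HasBinaryBiproducts C]

theorem kerExt {A B Z : C} {i : A ⟶ B} {d : B ⟶ Z} {w : i ≫ d = 0}
    (h : Nonempty (IsLimit (KernelFork.ofι i w))) :
    Mono i ∧ ∀ {T : C} (f : T ⟶ B), f ≫ d = 0 → ∃ l : T ⟶ A, l ≫ i = f := by
  obtain ⟨h⟩ := h
  refine ⟨⟨fun a b hab => Fork.IsLimit.hom_ext h hab⟩, fun f hf => ?_⟩
  obtain ⟨l, hl⟩ := KernelFork.IsLimit.lift' h f hf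
  exact ⟨l, hl⟩

theorem cokerExt {A B Z : C} {i : A ⟶ B} {d : B ⟶ Z} {w : i ≫ d = 0}
    (h : Nonempty (IsColimit (CokernelCofork.ofπ d w))) :
    Epi d ∧ ∀ {T : C} (f : B ⟶ T), i ≫ f = 0 → ∃ l : Z ⟶ T, d ≫ l = f := by
  obtain ⟨h⟩ := h
  refine ⟨⟨fun a b hab => Cofork.IsColimit.hom_ext h hab⟩, fun f hf => ?_⟩
  obtain ⟨l, hl⟩ := CokernelCofork.IsColimit.desc' h f hf
  exact ⟨l, hl⟩

theorem kerMk {A B Z : C} {i : A ⟶ B} {d : B ⟶ Z} (w : i ≫ d = 0) (hm : Mono i)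
    (h : ∀ {T : C} (f : T ⟶ B), f ≫ d = 0 → ∃ l : T ⟶ A, l ≫ i = f) :
    Nonempty (IsLimit (KernelFork.ofι i w)) :=
  ⟨KernelFork.IsLimit.ofι i w (fun f hf => (h f hf).choose) (fun f hf => (h f hf).choose_spec)
    (fun f hf m hm' => by rw [← cancel_mono i, hm', (h f hf).choose_spec])⟩

theorem cokerMk {A B Z : C} {i : A ⟶ B} {d : B ⟶ Z} (w : i ≫ d = 0) (hm : Epi d)
    (h : ∀ {T : C} (f : B ⟶ T), i ≫ f = 0 → ∃ l : Z ⟶ T, d ≫ l = f) :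
    Nonempty (IsColimit (CokernelCofork.ofπ d w)) :=
  ⟨CokernelCofork.IsColimit.ofπ d w (fun f hf => (h f hf).choose) (fun f hf => (h f hf).choose_spec)
    (fun f hf m hm' => by rw [← cancel_epi d, hm', (h f hf).choose_spec])⟩

theorem kcIso {A B Z A' B' Z' : C} {i : A ⟶ B} {d : B ⟶ Z} {i' : A' ⟶ B'} {d' : B' ⟶ Z'}
    (h : IsKernelCokernelPair i d) (eA : A ≅ A') (eB : B ≅ B') (eZ : Z ≅ Z')
    (h1 : i ≫ eB.hom = eA.hom ≫ i') (h2 : d ≫ eZ.hom = eB.hom ≫ d') :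
    IsKernelCokernelPair i' d' := by
  obtain ⟨w, hk, hc⟩ := h
  obtain ⟨_, hk⟩ := kerExt hk
  obtain ⟨_, hc⟩ := cokerExt hc
  have e1 : i' = eA.inv ≫ i ≫ eB.hom := by rw [h1]; simp
  have e2 : d' = eB.inv ≫ d ≫ eZ.hom := by rw [h2]; simp
  have w' : i' ≫ d' = 0 := by rw [e1, e2]; simp [reassoc_of% w]
  refine ⟨w', kerMk w' (by rw [e1]; infer_instance) ?_, cokerMk w' (by rw [e2]; infer_instance) ?_⟩
  · intro T f hf
    obtain ⟨l, hl⟩ := hk (f ≫ eB.inv) (by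
      rw [← cancel_mono eZ.hom]; simpa [e2] using hf)
    exact ⟨l ≫ eA.hom, by rw [e1]; simp [reassoc_of% hl]⟩
  · intro T f hf
    obtain ⟨l, hl⟩ := hc (eB.hom ≫ f) (by
      rw [← cancel_epi eA.inv]; simpa [e1] using hf)
    exact ⟨eZ.inv ≫ l, by rw [e2]; simp [hl]⟩

theorem kcSum {A₁ B₁ Z₁ A₂ B₂ Z₂ : C} {i₁ : A₁ ⟶ B₁} {d₁ : B₁ ⟶ Z₁} {i₂ : A₂ ⟶ B₂}
    {d₂ : B₂ ⟶ Z₂} (h₁ : IsKernelCokernelPair i₁ d₁) (h₂ : IsKernelCokernelPair i₂ d₂) :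
    IsKernelCokernelPair (biprod.map i₁ i₂) (biprod.map d₁ d₂) := by
  obtain ⟨w₁, hk₁, hc₁⟩ := h₁
  obtain ⟨w₂, hk₂, hc₂⟩ := h₂
  obtain ⟨_, hk₁⟩ := kerExt hk₁
  obtain ⟨_, hc₁⟩ := cokerExt hc₁
  obtain ⟨_, hk₂⟩ := kerExt hk₂
  obtain ⟨_, hc₂⟩ := cokerExt hc₂
  have w' : biprod.map i₁ i₂ ≫ biprod.map d₁ d₂ = 0 := by
    ext <;> simp [w₁, w₂]
  refine ⟨w', kerMk w' (Preadditive.mono_of_cancel_zero _ ?_) ?_,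
    cokerMk w' (Preadditive.epi_of_cancel_zero _ ?_) ?_⟩
  · intro T f hf
    ext
    · rw [← cancel_mono i₁]; simpa using hf =≫ biprod.fst
    · rw [← cancel_mono i₂]; simpa using hf =≫ biprod.snd
  · intro T f hf
    obtain ⟨l, hl⟩ := hk₁ (f ≫ biprod.fst) (by simpa using hf =≫ biprod.fst)
    obtain ⟨m, hm⟩ := hk₂ (f ≫ biprod.snd) (by simpa using hf =≫ biprod.snd)
    exact ⟨biprod.lift l m, by ext <;> simp [hl, hm]⟩
  · intro T f hf
    ext
    · rw [← cancel_epi d₁]; simpa using biprod.inl ≫= hf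
    · rw [← cancel_epi d₂]; simpa using biprod.inr ≫= hf
  · intro T f hf
    obtain ⟨l, hl⟩ := hc₁ (biprod.inl ≫ f) (by simpa using biprod.inl ≫= hf)
    obtain ⟨m, hm⟩ := hc₂ (biprod.inr ≫ f) (by simpa using biprod.inr ≫= hf)
    exact ⟨biprod.desc l m, by ext <;> simp [hl, hm]⟩

theorem kcPushout {A B Z A' S : C} {i : A ⟶ B} {d : B ⟶ Z} (h : IsKernelCokernelPair i d)
    {t : A ⟶ A'} {g : B ⟶ S} {i' : A' ⟶ S} (sq : IsPushout i t g i') (hi' : IsSomeKernel i') :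
    ∃ d' : S ⟶ Z, g ≫ d' = d ∧ IsKernelCokernelPair i' d' := by
  obtain ⟨w, -, hc⟩ := h
  obtain ⟨_, hc⟩ := cokerExt hc
  obtain ⟨Y, y, wy, hy⟩ := hi'
  obtain ⟨_, hy⟩ := kerExt hy
  have hg : g ≫ sq.desc d 0 (by simp [w]) = d := by simp
  have w' : i' ≫ sq.desc d 0 (by simp [w]) = 0 := by simp
  generalize sq.desc d 0 (by simp [w]) = d' at hg w'
  have hc' : ∀ {T : C} (f : S ⟶ T), i' ≫ f = 0 → ∃ l : Z ⟶ T, d' ≫ l = f := by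
    intro T f hf
    obtain ⟨l, hl⟩ := hc (g ≫ f) (by rw [sq.w_assoc, hf, comp_zero])
    refine ⟨l, sq.hom_ext ?_ ?_⟩
    · rw [reassoc_of% hg, hl]
    · rw [reassoc_of% w', hf, zero_comp]
  refine ⟨d', hg, w', kerMk w' inferInstance ?_, cokerMk w' ?_ hc'⟩
  · intro T f hf
    obtain ⟨l, hl⟩ := hc' y wy
    exact hy f (by rw [← hl, reassoc_of% hf, zero_comp])
  · have : Epi (g ≫ d') := by rw [hg]; infer_instance
    exact epi_of_epi g d'

theorem kcPullback {A B Z D P : C} {i : A ⟶ B} {d : B ⟶ Z} (h : IsKernelCokernelPair i d)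
    {t : D ⟶ Z} {p : P ⟶ B} {q : P ⟶ D} (sq : IsPullback p q d t) (hq : IsSomeCokernel q) :
    ∃ i' : A ⟶ P, i' ≫ p = i ∧ IsKernelCokernelPair i' q := by
  obtain ⟨w, hk, -⟩ := h
  obtain ⟨_, hk⟩ := kerExt hk
  obtain ⟨Y, y, wy, hy⟩ := hq
  obtain ⟨_, hy⟩ := cokerExt hy
  have hg : sq.lift i 0 (by simp [w]) ≫ p = i := by simp
  have w' : sq.lift i 0 (by simp [w]) ≫ q = 0 := by simp
  generalize sq.lift i 0 (by simp [w]) = i' at hg w'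
  have hk' : ∀ {T : C} (f : T ⟶ P), f ≫ q = 0 → ∃ l : T ⟶ A, l ≫ i' = f := by
    intro T f hf
    obtain ⟨l, hl⟩ := hk (f ≫ p) (by rw [Category.assoc, sq.w, reassoc_of% hf, zero_comp])
    refine ⟨l, sq.hom_ext ?_ ?_⟩
    · rw [Category.assoc, hg, hl]
    · rw [Category.assoc, w', hf, comp_zero]
  refine ⟨i', hg, w', kerMk w' ?_ hk', cokerMk w' inferInstance ?_⟩
  · have : Mono (i' ≫ p) := by rw [hg]; infer_instance
    exact mono_of_mono i' p
  · intro T f hf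
    obtain ⟨l, hl⟩ := hk' y wy
    exact hy f (by rw [← hl, Category.assoc, hf, comp_zero])

/-- A right weakly exact structure and a left weakly exact structure can be glued to a weakly
exact structure consisting of the kernel–cokernel pairs `(i, d)` with `i ∈ 𝓘` and `d ∈ 𝓓`. -/
theorem statement5 (ℛ : RightWeaklyExactStructure C) (ℒ : LeftWeaklyExactStructure C) :
    ∃ 𝒲 : WeaklyExactStructure C, ∀ {A B Z : C} (i : A ⟶ B) (d : B ⟶ Z),
      𝒲.W i d ↔ (IsKernelCokernelPair i d ∧ ℛ.I i ∧ ℒ.D d) := by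
  refine ⟨{
    W := fun A B Z i d => IsKernelCokernelPair i d ∧ ℛ.I i ∧ ℒ.D d
    kc_of_mem := fun h => h.1
    iso_closed := ?_
    sum_mem := fun h h' => ⟨kcSum h.1 h'.1, ℛ.sum_mem h.2.1 h'.2.1, ℒ.sum_mem h.2.2 h'.2.2⟩
    id_zero_mem := ?_
    zero_id_mem := ?_
    pushout_mem := ?_
    pullback_mem := ?_ }, fun i d => Iff.rfl⟩
  · rintro A B Z A' B' Z' i d i' d' ⟨h, hi, hd⟩ ⟨eA, eB, eZ, h1, h2⟩
    exact ⟨kcIso h eA eB eZ h1 h2, ℛ.iso_closed eA eB h1 hi, ℒ.iso_closed eB eZ h2 hd⟩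
  · intro X
    refine ⟨⟨by simp, kerMk _ inferInstance fun f _ => ⟨f, by simp⟩, cokerMk _ ?_ ?_⟩,
      ℛ.id_mem X, ℒ.zero_mem X⟩
    · exact ⟨fun a b _ => (isZero_zero C).eq_of_src a b⟩
    · intro T f hf
      exact ⟨0, by simpa using hf.symm⟩
  · intro X
    refine ⟨⟨by simp, kerMk _ ?_ ?_, cokerMk _ inferInstance fun f _ => ⟨f, by simp⟩⟩,
      ℛ.zero_mem X, ℒ.id_mem X⟩
    · exact ⟨fun a b _ => (isZero_zero C).eq_of_tgt a b⟩
    · intro T f hf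
      exact ⟨0, by simpa using hf.symm⟩
  · rintro A B Z A' i d ⟨h, hi, hd⟩ t
    obtain ⟨S, g, i', sq, hi'⟩ := ℛ.pushout_mem hi t
    obtain ⟨d', hg, h'⟩ := kcPushout h sq (ℛ.ker_of_mem hi')
    exact ⟨S, g, i', sq, Z, d', h', hi',
      ℒ.cancel_mem g d' (by rw [hg]; exact hd) ⟨_, i', h'.w, h'.isKernel⟩⟩
  · rintro A B Z D i d ⟨h, hi, hd⟩ t
    obtain ⟨P, p, q, sq, hq⟩ := ℒ.pullback_mem hd t
    obtain ⟨i', hg, h'⟩ := kcPullback h sq (ℒ.coker_of_mem hq)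
    exact ⟨P, p, q, sq, A, i', h',
      ℛ.cancel_mem i' p (by rw [hg]; exact hi) ⟨_, q, h'.w, h'.isCokernel⟩, hq⟩

end Statement

end WeaklyExactPaper
end

section
/- Let 𝒜 be an additive category and let {𝒲_i}_{i ∈ I} be a family of weakly exact structures on 𝒜. Then the intersection ⋂_{i ∈ I} 𝒲_i is again a weakly exact structure on 𝒜. -/
open CategoryTheory CategoryTheory.Limits ZeroObject

universe w v u

namespace WeaklyExactPaper

section Statement

variable {C : Type u} [Category.{v} C] [Preadditive C] [HasZeroObject C] [HasBinaryBiproducts C]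

theorem admissible_monic_transfer (𝒲 : WeaklyExactStructure C) {A S₂ S Z₂ Z : C}
    {i₂ : A ⟶ S₂} {d₂ : S₂ ⟶ Z₂} {i : A ⟶ S} {d : S ⟶ Z} (h₂ : 𝒲.W i₂ d₂)
    (h : IsKernelCokernelPair i d) (e : S₂ ≅ S) (he : i₂ ≫ e.hom = i) : 𝒲.W i d := by
  obtain ⟨w₂, -, ⟨c₂⟩⟩ := 𝒲.kc_of_mem h₂
  obtain ⟨w, -, ⟨c⟩⟩ := h
  have he' : i ≫ e.inv = i₂ := by rw [← he]; simp
  obtain ⟨φ, hφ⟩ := CokernelCofork.IsColimit.desc' c₂ (e.hom ≫ d)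
    (by rw [← Category.assoc, he, w])
  obtain ⟨ψ, hψ⟩ := CokernelCofork.IsColimit.desc' c (e.inv ≫ d₂)
    (by rw [← Category.assoc, he', w₂])
  change d₂ ≫ φ = _ at hφ
  change d ≫ ψ = _ at hψ
  refine 𝒲.iso_closed h₂ ⟨Iso.refl _, e, ⟨φ, ψ, ?_, ?_⟩, by simpa using he, hφ⟩
  · apply Cofork.IsColimit.hom_ext c₂
    change d₂ ≫ φ ≫ ψ = d₂ ≫ 𝟙 _
    rw [← Category.assoc, hφ, Category.assoc, hψ]; simp
  · apply Cofork.IsColimit.hom_ext c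
    change d ≫ ψ ≫ φ = d ≫ 𝟙 _
    rw [← Category.assoc, hψ, Category.assoc, hφ]; simp

theorem admissible_epic_transfer (𝒲 : WeaklyExactStructure C) {A₂ A P₂ P D : C}
    {i₂ : A₂ ⟶ P₂} {d₂ : P₂ ⟶ D} {i : A ⟶ P} {d : P ⟶ D} (h₂ : 𝒲.W i₂ d₂)
    (h : IsKernelCokernelPair i d) (e : P₂ ≅ P) (he : e.hom ≫ d = d₂) : 𝒲.W i d := by
  obtain ⟨w₂, ⟨c₂⟩, -⟩ := 𝒲.kc_of_mem h₂
  obtain ⟨w, ⟨c⟩, -⟩ := h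
  have he' : e.inv ≫ d₂ = d := by rw [← he]; simp
  obtain ⟨φ, hφ⟩ := KernelFork.IsLimit.lift' c (i₂ ≫ e.hom)
    (by rw [Category.assoc, he, w₂])
  obtain ⟨ψ, hψ⟩ := KernelFork.IsLimit.lift' c₂ (i ≫ e.inv)
    (by rw [Category.assoc, he', w])
  change φ ≫ i = _ at hφ
  change ψ ≫ i₂ = _ at hψ
  refine 𝒲.iso_closed h₂ ⟨⟨φ, ψ, ?_, ?_⟩, e, Iso.refl _, hφ.symm, by simpa using he.symm⟩
  · apply Fork.IsLimit.hom_ext c₂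
    change (φ ≫ ψ) ≫ i₂ = 𝟙 _ ≫ i₂
    rw [Category.assoc, hψ, ← Category.assoc, hφ]; simp
  · apply Fork.IsLimit.hom_ext c
    change (ψ ≫ φ) ≫ i = 𝟙 _ ≫ i
    rw [Category.assoc, hφ, ← Category.assoc, hψ]; simp

/-- The intersection of a (nonempty) family of weakly exact structures is again a weakly
exact structure. -/
theorem statement7 (ι : Type w) [Nonempty ι] (F : ι → WeaklyExactStructure C) :
    ∃ 𝒲 : WeaklyExactStructure C, ∀ {A B Z : C} (i : A ⟶ B) (d : B ⟶ Z),
      𝒲.W i d ↔ ∀ k : ι, (F k).W i d := by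
  obtain ⟨k₀⟩ := ‹Nonempty ι›
  refine ⟨{
    W := fun A B Z i d => ∀ k, (F k).W i d
    kc_of_mem := fun h => (F k₀).kc_of_mem (h k₀)
    iso_closed := fun h e k => (F k).iso_closed (h k) e
    sum_mem := fun h₁ h₂ k => (F k).sum_mem (h₁ k) (h₂ k)
    id_zero_mem := fun X k => (F k).id_zero_mem X
    zero_id_mem := fun X k => (F k).zero_id_mem X
    pushout_mem := ?_
    pullback_mem := ?_ }, fun i d => Iff.rfl⟩
  · intro A B Z A' i d h t
    obtain ⟨S, g, i', hS, Z', d', hW⟩ := (F k₀).pushout_mem (h k₀) t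
    refine ⟨S, g, i', hS, Z', d', fun k => ?_⟩
    obtain ⟨S₂, g₂, i₂, hS₂, Z₂, d₂, hW₂⟩ := (F k).pushout_mem (h k) t
    exact admissible_monic_transfer (F k) hW₂ ((F k₀).kc_of_mem hW)
      (hS₂.isoIsPushout _ _ hS) (by simp)
  · intro A B Z D i d h t
    obtain ⟨P, p, q, hP, A', i', hW⟩ := (F k₀).pullback_mem (h k₀) t
    refine ⟨P, p, q, hP, A', i', fun k => ?_⟩
    obtain ⟨P₂, p₂, q₂, hP₂, A₂, i₂, hW₂⟩ := (F k).pullback_mem (h k) t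
    exact admissible_epic_transfer (F k) hW₂ ((F k₀).kc_of_mem hW)
      (hP₂.isoIsPullback _ _ hP) (by simp)

end Statement

end WeaklyExactPaper
end

section
/- Let 𝒜 be an additive category and let {𝓘_i}_{i ∈ I} be a family of right weakly exact structures on 𝒜. Then the intersection ⋂_{i ∈ I} 𝓘_i is again a right weakly exact structure on 𝒜; dually, the intersection of any family of left weakly exact structures is a left weakly exact structure. Consequently the right (resp. left) weakly exact structures on 𝒜, ordered by containment, form a complete meet-semilattice with meet given by intersection. -/
open CategoryTheory CategoryTheory.Limits ZeroObject

universe w v u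

namespace WeaklyExactPaper

section Statement

variable {C : Type u} [Category.{v} C] [Preadditive C] [HasZeroObject C] [HasBinaryBiproducts C]

/-- Intersections of (nonempty) families of right (resp. left) weakly exact structures are
again right (resp. left) weakly exact structures, and they are greatest lower bounds; hence
the right (resp. left) weakly exact structures form a complete meet-semilattice under
containment with meet given by intersection. -/
theorem statement8 :
    (∀ (ι : Type w) [Nonempty ι] (F : ι → RightWeaklyExactStructure C),
      ∃ G : RightWeaklyExactStructure C,
        (∀ {A B : C} (f : A ⟶ B), G.I f ↔ ∀ k, (F k).I f) ∧
        (∀ k, ∀ {A B : C} (f : A ⟶ B), G.I f → (F k).I f) ∧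
        (∀ H : RightWeaklyExactStructure C,
          (∀ k, ∀ {A B : C} (f : A ⟶ B), H.I f → (F k).I f) →
          ∀ {A B : C} (f : A ⟶ B), H.I f → G.I f)) ∧
    (∀ (ι : Type w) [Nonempty ι] (F : ι → LeftWeaklyExactStructure C),
      ∃ G : LeftWeaklyExactStructure C,
        (∀ {B Z : C} (g : B ⟶ Z), G.D g ↔ ∀ k, (F k).D g) ∧
        (∀ k, ∀ {B Z : C} (g : B ⟶ Z), G.D g → (F k).D g) ∧
        (∀ H : LeftWeaklyExactStructure C,
          (∀ k, ∀ {B Z : C} (g : B ⟶ Z), H.D g → (F k).D g) →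
          ∀ {B Z : C} (g : B ⟶ Z), H.D g → G.D g)) := by
  refine ⟨fun ι _ F => ?_, fun ι _ F => ?_⟩
  · refine ⟨{ I := fun A B f => ∀ k, (F k).I f
              ker_of_mem := fun h => (F (Classical.arbitrary ι)).ker_of_mem (h _)
              iso_closed := fun eA eB e h k => (F k).iso_closed eA eB e (h k)
              id_mem := fun X k => (F k).id_mem X
              zero_mem := fun X k => (F k).zero_mem X
              pushout_mem := ?_
              cancel_mem := fun a b h hc k => (F k).cancel_mem a b (h k) hc
              sum_mem := fun h h' k => (F k).sum_mem (h k) (h' k) },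
      fun f => Iff.rfl, fun k _ _ f h => h k, fun H hH _ _ f h k => hH k f h⟩
    intro X Y X' f hf h
    obtain ⟨Y', h', f', sq, -⟩ := (F (Classical.arbitrary ι)).pushout_mem (hf _) h
    refine ⟨Y', h', f', sq, fun k => ?_⟩
    obtain ⟨Y'', h'', f'', sq', hk⟩ := (F k).pushout_mem (hf k) h
    exact (F k).iso_closed (Iso.refl _) (sq'.isoIsPushout _ _ sq) (by simp) hk
  · refine ⟨{ D := fun A B f => ∀ k, (F k).D f
              coker_of_mem := fun h => (F (Classical.arbitrary ι)).coker_of_mem (h _)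
              iso_closed := fun eA eB e h k => (F k).iso_closed eA eB e (h k)
              id_mem := fun X k => (F k).id_mem X
              zero_mem := fun X k => (F k).zero_mem X
              pullback_mem := ?_
              cancel_mem := fun a b h hc k => (F k).cancel_mem a b (h k) hc
              sum_mem := fun h h' k => (F k).sum_mem (h k) (h' k) },
      fun f => Iff.rfl, fun k _ _ f h => h k, fun H hH _ _ f h k => hH k f h⟩
    intro B Z E f hf h
    obtain ⟨P, p, e, sq, -⟩ := (F (Classical.arbitrary ι)).pullback_mem (hf _) h
    refine ⟨P, p, e, sq, fun k => ?_⟩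
    obtain ⟨P', p', e', sq', hk⟩ := (F k).pullback_mem (hf k) h
    exact (F k).iso_closed (sq'.isoIsPullback _ _ sq) (Iso.refl _) (by simp) hk

end Statement

end WeaklyExactPaper
end

section
/- Let 𝒲 be a weakly exact structure on an additive category 𝒜, let (i : A ⟶ B, d : B ⟶ C) ∈ 𝒲 and let t : A ⟶ A' be any morphism. Then a pushout of i along t exists, giving a pushout square with morphisms i' : A' ⟶ B' and g : B ⟶ B'; there is a unique morphism d' : B' ⟶ C with d' ∘ g = d and d' ∘ i' = 0, the pair (i', d') is a kernel–cokernel pair, and (i', d') belongs to 𝒲. Dually, the pullback of d along any morphism c : C' ⟶ C yields a kernel–cokernel pair belonging to 𝒲. -/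
open CategoryTheory CategoryTheory.Limits ZeroObject

universe w v u

namespace WeaklyExactPaper

section Statement

variable {C : Type u} [Category.{v} C] [Preadditive C] [HasZeroObject C] [HasBinaryBiproducts C]

/-- The pushout of an admissible short exact sequence along any morphism exists and yields an
admissible short exact sequence of the weakly exact structure, with the cokernel part induced
uniquely; dually pullbacks of admissible short exact sequences yield admissible short exact
sequences. -/
theorem statement10 (𝒲 : WeaklyExactStructure C) {A B Z A' : C} {i : A ⟶ B} {d : B ⟶ Z}
    (h : 𝒲.W i d) (t : A ⟶ A') :
    (∃ (B' : C) (g : B ⟶ B') (i' : A' ⟶ B'), IsPushout i t g i' ∧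
      ∃ d' : B' ⟶ Z, (g ≫ d' = d ∧ i' ≫ d' = 0) ∧
        (∀ d'' : B' ⟶ Z, g ≫ d'' = d → i' ≫ d'' = 0 → d'' = d') ∧
        IsKernelCokernelPair i' d' ∧ 𝒲.W i' d') ∧
    (∀ {D : C} (c : D ⟶ Z), ∃ (P : C) (p : P ⟶ B) (q : P ⟶ D), IsPullback p q d c ∧
      ∃ i'' : A ⟶ P, i'' ≫ p = i ∧ i'' ≫ q = 0 ∧
        IsKernelCokernelPair i'' q ∧ 𝒲.W i'' q) := by
  have hk := 𝒲.kc_of_mem h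
  obtain ⟨hl⟩ := hk.isKernel
  obtain ⟨hc⟩ := hk.isCokernel
  constructor
  · obtain ⟨S, g, i', hp, Z', e, he⟩ := 𝒲.pushout_mem h t
    have hk' := 𝒲.kc_of_mem he
    obtain ⟨hc'⟩ := hk'.isCokernel
    obtain ⟨d', h1, h2⟩ : ∃ d' : S ⟶ Z, g ≫ d' = d ∧ i' ≫ d' = 0 :=
      ⟨hp.desc d 0 (by simp [hk.w]), by simp, by simp⟩
    obtain ⟨u, hu⟩ : ∃ u : Z' ⟶ Z, e ≫ u = d' := by
      obtain ⟨u, hu⟩ := CokernelCofork.IsColimit.desc' hc' d' h2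
      exact ⟨u, hu⟩
    obtain ⟨v, hv⟩ : ∃ v : Z ⟶ Z', d ≫ v = g ≫ e := by
      obtain ⟨v, hv⟩ := CokernelCofork.IsColimit.desc' hc (g ≫ e)
        (by rw [← Category.assoc, hp.w, Category.assoc, hk'.w, comp_zero])
      exact ⟨v, hv⟩
    have hdv : d' ≫ v = e := by
      apply hp.hom_ext
      · rw [← Category.assoc, h1, hv]
      · rw [← Category.assoc, h2, hk'.w, zero_comp]
    have huv : u ≫ v = 𝟙 Z' := by
      apply Cofork.IsColimit.hom_ext hc'
      change e ≫ u ≫ v = e ≫ 𝟙 _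
      rw [← Category.assoc, hu, hdv, Category.comp_id]
    have hvu : v ≫ u = 𝟙 Z := by
      apply Cofork.IsColimit.hom_ext hc
      change d ≫ v ≫ u = d ≫ 𝟙 _
      rw [← Category.assoc, hv, Category.assoc, hu, h1, Category.comp_id]
    have hW : 𝒲.W i' d' := 𝒲.iso_closed he
      ⟨Iso.refl _, Iso.refl _, ⟨u, v, huv, hvu⟩, by simp, by simp [hu]⟩
    refine ⟨S, g, i', hp, d', ⟨h1, h2⟩, ?_, 𝒲.kc_of_mem hW, hW⟩
    intro d'' h3 h4
    apply hp.hom_ext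
    · rw [h1, h3]
    · rw [h2, h4]
  · intro D c
    obtain ⟨P, p, q, hp, A₁, e, he⟩ := 𝒲.pullback_mem h c
    have hk' := 𝒲.kc_of_mem he
    obtain ⟨hl'⟩ := hk'.isKernel
    obtain ⟨j, h1, h2⟩ : ∃ j : A ⟶ P, j ≫ p = i ∧ j ≫ q = 0 :=
      ⟨hp.lift i 0 (by simp [hk.w]), by simp, by simp⟩
    obtain ⟨u, hu⟩ : ∃ u : A ⟶ A₁, u ≫ e = j := by
      obtain ⟨u, hu⟩ := KernelFork.IsLimit.lift' hl' j h2
      exact ⟨u, hu⟩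
    obtain ⟨v, hv⟩ : ∃ v : A₁ ⟶ A, v ≫ i = e ≫ p := by
      obtain ⟨v, hv⟩ := KernelFork.IsLimit.lift' hl (e ≫ p)
        (by rw [Category.assoc, hp.w, ← Category.assoc, hk'.w, zero_comp])
      exact ⟨v, hv⟩
    have hvj : v ≫ j = e := by
      apply hp.hom_ext
      · rw [Category.assoc, h1, hv]
      · rw [Category.assoc, h2, hk'.w, comp_zero]
    have hvu : v ≫ u = 𝟙 A₁ := by
      apply Fork.IsLimit.hom_ext hl'
      change (v ≫ u) ≫ e = 𝟙 _ ≫ e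
      rw [Category.assoc, hu, hvj, Category.id_comp]
    have huv : u ≫ v = 𝟙 A := by
      apply Fork.IsLimit.hom_ext hl
      change (u ≫ v) ≫ i = 𝟙 _ ≫ i
      rw [Category.assoc, hv, ← Category.assoc, hu, h1, Category.id_comp]
    have hW : 𝒲.W j q := 𝒲.iso_closed he
      ⟨⟨v, u, hvu, huv⟩, Iso.refl _, Iso.refl _, by simp [hvj], by simp⟩
    exact ⟨P, p, q, hp, j, h1, h2, 𝒲.kc_of_mem hW, hW⟩

end Statement

end WeaklyExactPaper
end

section
/- Let 𝒲 be a weakly exact structure on an additive category 𝒜 and let (i₁ : A ⟶ B₁, d₁ : B₁ ⟶ C) and (i₂ : A ⟶ B₂, d₂ : B₂ ⟶ C) be two pairs in 𝒲 with the same end terms A and C. Then any Baer sum of these two pairs — i.e. the kernel–cokernel pair obtained from the direct sum pair (i₁ ⊕ i₂ : A ⊕ A ⟶ B₁ ⊕ B₂, d₁ ⊕ d₂ : B₁ ⊕ B₂ ⟶ C ⊕ C) by first forming a pullback of d₁ ⊕ d₂ along the diagonal Δ_C : C ⟶ C ⊕ C and then forming a pushout of the resulting admissible monic along the codiagonal ∇_A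 : A ⊕ A ⟶ A — is again a pair from A to C belonging to 𝒲. -/
open CategoryTheory CategoryTheory.Limits ZeroObject

universe w v u

namespace WeaklyExactPaper

section Statement

variable {C : Type u} [Category.{v} C] [Preadditive C] [HasZeroObject C] [HasBinaryBiproducts C]

theorem pb_aux (𝒲 : WeaklyExactStructure C) {A B Z D P : C} {i : A ⟶ B} {d : B ⟶ Z}
    (h : 𝒲.W i d) {t : D ⟶ Z} {p : P ⟶ B} {q : P ⟶ D} (hpb : IsPullback p q d t)
    (i' : A ⟶ P) (h1 : i' ≫ p = i) (h2 : i' ≫ q = 0) : 𝒲.W i' q := by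
  obtain ⟨P', p', q', hpb', A'', i'', hW⟩ := 𝒲.pullback_mem h t
  obtain ⟨w, ⟨hk⟩, -⟩ := 𝒲.kc_of_mem h
  obtain ⟨w', ⟨hk'⟩, -⟩ := 𝒲.kc_of_mem hW
  have hm : Mono i := mono_of_isLimit_fork hk
  have hm' : Mono i'' := mono_of_isLimit_fork hk'
  let e : P' ≅ P := hpb'.isoIsPullback _ _ hpb
  have e1 : e.hom ≫ p = p' := hpb'.isoIsPullback_hom_fst _ _ hpb
  have e2 : e.hom ≫ q = q' := hpb'.isoIsPullback_hom_snd _ _ hpb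
  have e3 : e.inv ≫ q' = q := by rw [← e2]; simp
  obtain ⟨a, ha⟩ := KernelFork.IsLimit.lift' hk (i'' ≫ p')
    (by rw [Category.assoc, hpb'.w, reassoc_of% w', zero_comp])
  obtain ⟨b, hb⟩ := KernelFork.IsLimit.lift' hk' (i' ≫ e.inv)
    (by rw [Category.assoc, e3, h2])
  simp only [Fork.ι_ofι] at ha hb
  have ha' : i'' ≫ e.hom = a ≫ i' := by
    apply hpb.hom_ext
    · rw [Category.assoc, Category.assoc, e1, h1, ha]
    · rw [Category.assoc, Category.assoc, e2, h2, w', comp_zero]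
  have hmi : Mono i' := by
    have : Mono (i' ≫ p) := by rw [h1]; exact hm
    exact mono_of_mono i' p
  refine 𝒲.iso_closed hW ⟨⟨a, b, ?_, ?_⟩, e, Iso.refl _, ha', by simp [e2]⟩
  · rw [← cancel_mono i'', Category.assoc, hb, ← reassoc_of% ha']; simp
  · rw [← cancel_mono i', Category.assoc, ← ha', reassoc_of% hb]; simp

theorem po_aux (𝒲 : WeaklyExactStructure C) {A B Z A' S : C} {i : A ⟶ B} {d : B ⟶ Z}
    (h : 𝒲.W i d) {t : A ⟶ A'} {g : B ⟶ S} {j : A' ⟶ S} (hpo : IsPushout i t g j)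
    (d' : S ⟶ Z) (h1 : g ≫ d' = d) (h2 : j ≫ d' = 0) : 𝒲.W j d' := by
  obtain ⟨S', g', j', hpo', Z', d'', hW⟩ := 𝒲.pushout_mem h t
  obtain ⟨w, -, ⟨hk⟩⟩ := 𝒲.kc_of_mem h
  obtain ⟨w', -, ⟨hk'⟩⟩ := 𝒲.kc_of_mem hW
  have hm : Epi d := epi_of_isColimit_cofork hk
  have hm' : Epi d'' := epi_of_isColimit_cofork hk'
  let e : S' ≅ S := hpo'.isoIsPushout _ _ hpo
  have e1 : g' ≫ e.hom = g := hpo'.inl_isoIsPushout_hom _ _ hpo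
  have e2 : j' ≫ e.hom = j := hpo'.inr_isoIsPushout_hom _ _ hpo
  obtain ⟨a, ha⟩ := CokernelCofork.IsColimit.desc' hk (g' ≫ d'')
    (by rw [reassoc_of% hpo'.w, w', comp_zero])
  obtain ⟨b, hb⟩ := CokernelCofork.IsColimit.desc' hk' (e.hom ≫ d')
    (by rw [reassoc_of% e2, h2])
  simp only [Cofork.π_ofπ] at ha hb
  have ha' : e.hom ≫ d' ≫ a = d'' := by
    apply hpo'.hom_ext
    · rw [reassoc_of% e1, reassoc_of% h1, ha]
    · rw [reassoc_of% e2, reassoc_of% h2, w', zero_comp]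
  have hme : Epi d' := by
    have : Epi (g ≫ d') := by rw [h1]; exact hm
    exact epi_of_epi g d'
  refine 𝒲.iso_closed hW ⟨Iso.refl _, e, ⟨b, a, ?_, ?_⟩, by simp [e2], hb⟩
  · rw [← cancel_epi d'', reassoc_of% hb, ha']; simp
  · rw [← cancel_epi d', ← cancel_epi e.hom, reassoc_of% ha', hb]; simp

/-- The Baer sum of two admissible short exact sequences from `A` to `Z` of a weakly exact
structure — obtained from the direct sum sequence by a pullback along the diagonal `Δ_Z`
followed by a pushout along the codiagonal `∇_A` — again belongs to the weakly exact
structure. -/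
theorem statement11 (𝒲 : WeaklyExactStructure C)
    {A B₁ B₂ Z : C} {i₁ : A ⟶ B₁} {d₁ : B₁ ⟶ Z} {i₂ : A ⟶ B₂} {d₂ : B₂ ⟶ Z}
    (h₁ : 𝒲.W i₁ d₁) (h₂ : 𝒲.W i₂ d₂)
    {P : C} (p : P ⟶ B₁ ⊞ B₂) (dP : P ⟶ Z)
    (hpb : IsPullback p dP (biprod.map d₁ d₂) (biprod.lift (𝟙 Z) (𝟙 Z)))
    (iP : A ⊞ A ⟶ P) (hiP₁ : iP ≫ p = biprod.map i₁ i₂) (hiP₂ : iP ≫ dP = 0)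
    {S : C} (g : P ⟶ S) (i₃ : A ⟶ S)
    (hpo : IsPushout iP (biprod.desc (𝟙 A) (𝟙 A)) g i₃)
    (d₃ : S ⟶ Z) (hd₃₁ : g ≫ d₃ = dP) (hd₃₂ : i₃ ≫ d₃ = 0) :
    𝒲.W i₃ d₃ := by
  exact po_aux 𝒲 (pb_aux 𝒲 (𝒲.sum_mem h₁ h₂) hpb iP hiP₁ hiP₂) hpo d₃ hd₃₁ hd₃₂

end Statement

end WeaklyExactPaper
end

section
/- Let 𝒱 be a weakly exact structure on an additive category 𝒜 (for instance the maximal exact structure 𝓔_max). Then the weakly exact structures on 𝒜 contained in 𝒱, ordered by containment, form a complete bounded lattice: the meet of any family is its intersection, every family {𝒲_i} admits a least upper bound (namely the intersection of all weakly exact structures contained in 𝒱 that contain every 𝒲_i), the least element is the split structure 𝓔_min and the greatest element is 𝒱. -/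
open CategoryTheory CategoryTheory.Limits ZeroObject

universe w v u

namespace WeaklyExactPaper

section Statement

variable {C : Type u} [Category.{v} C] [Preadditive C] [HasZeroObject C] [HasBinaryBiproducts C]

/-- Containment of weakly exact structures. -/
def WESle (𝒲 𝒱 : WeaklyExactStructure C) : Prop :=
  ∀ ⦃A B Z : C⦄ (i : A ⟶ B) (d : B ⟶ Z), 𝒲.W i d → 𝒱.W i d

theorem isSplitPair_iff {A B Z : C} (i : A ⟶ B) (d : B ⟶ Z) :
    IsSplitPair i d ↔ ∃ (r : B ⟶ A) (s : Z ⟶ B), i ≫ r = 𝟙 A ∧ s ≫ d = 𝟙 Z ∧ i ≫ d = 0 ∧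
      s ≫ r = 0 ∧ r ≫ i + d ≫ s = 𝟙 B := by
  constructor
  · rintro ⟨X, Y, eA, eB, eZ, h1, h2⟩
    have hi : i = eA.inv ≫ biprod.inl ≫ eB.hom := by rw [h1]; simp
    have hd : d = eB.inv ≫ biprod.snd ≫ eZ.hom := by rw [h2]; simp
    subst hi hd
    refine ⟨eB.inv ≫ biprod.fst ≫ eA.hom, eZ.inv ≫ biprod.inr ≫ eB.hom, ?_, ?_, ?_, ?_, ?_⟩
    · simp
    · simp
    · simp
    · simp
    · have : eB.inv ≫ (biprod.fst ≫ biprod.inl + biprod.snd ≫ biprod.inr) ≫ eB.hom = 𝟙 B := by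
        rw [biprod.total]; simp
      simpa only [Preadditive.comp_add, Preadditive.add_comp, Category.assoc, Iso.hom_inv_id_assoc,
        Iso.inv_hom_id_assoc] using this
  · rintro ⟨r, s, h1, h2, h3, h4, h5⟩
    refine ⟨A, Z, Iso.refl _, ⟨biprod.desc i s, biprod.lift r d, ?_, ?_⟩, Iso.refl _, ?_, ?_⟩
    · ext <;> simp [h1, h2, h3, h4]
    · simp [biprod.lift_desc, h5]
    · simp
    · ext <;> simp [h2, h3]

theorem PairIso.trans' {A B Z A' B' Z' A'' B'' Z'' : C} {i : A ⟶ B} {d : B ⟶ Z} {i' : A' ⟶ B'}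
    {d' : B' ⟶ Z'} {i'' : A'' ⟶ B''} {d'' : B'' ⟶ Z''} (h : PairIso i d i' d')
    (h' : PairIso i' d' i'' d'') : PairIso i d i'' d'' := by
  obtain ⟨a, b, c, h1, h2⟩ := h
  obtain ⟨a', b', c', h1', h2'⟩ := h'
  refine ⟨a ≪≫ a', b ≪≫ b', c ≪≫ c', ?_, ?_⟩
  · simp [reassoc_of% h1, h1']
  · simp [reassoc_of% h2, h2']

/-- The split structure. -/
def splitWES (C : Type u) [Category.{v} C] [Preadditive C]
    [HasZeroObject C] [HasBinaryBiproducts C] : WeaklyExactStructure C where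
  W := fun _ _ _ i d => IsSplitPair i d
  kc_of_mem := by
    intro A B Z i d h
    obtain ⟨r, s, h1, h2, h3, h4, h5⟩ := (isSplitPair_iff i d).1 h
    have : Mono i := (IsSplitMono.mk' ⟨r, h1⟩ : IsSplitMono i).mono
    have : Epi d := (IsSplitEpi.mk' ⟨s, h2⟩ : IsSplitEpi d).epi
    refine ⟨h3, ⟨KernelFork.IsLimit.ofι' i h3 fun {T} k hk => ⟨k ≫ r, ?_⟩⟩,
      ⟨CokernelCofork.IsColimit.ofπ' d h3 fun {T} k hk => ⟨s ≫ k, ?_⟩⟩⟩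
    · have := k ≫= h5
      simpa [reassoc_of% hk] using this
    · have := h5 =≫ k
      simpa [hk] using this
  iso_closed := by
    rintro A B Z A' B' Z' i d i' d' ⟨X, Y, h⟩ h'
    exact ⟨X, Y, h.trans' h'⟩
  sum_mem := by
    intro A₁ B₁ Z₁ A₂ B₂ Z₂ i₁ d₁ i₂ d₂ h h'
    obtain ⟨r, s, h1, h2, h3, h4, h5⟩ := (isSplitPair_iff _ _).1 h
    obtain ⟨r', s', h1', h2', h3', h4', h5'⟩ := (isSplitPair_iff _ _).1 h'
    refine (isSplitPair_iff _ _).2 ⟨biprod.map r r', biprod.map s s', ?_, ?_, ?_, ?_, ?_⟩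
    · ext <;> simp [h1, h1']
    · ext <;> simp [h2, h2']
    · ext <;> simp [h3, h3']
    · ext <;> simp [h4, h4']
    · have e := h5 =≫ (biprod.inl : B₁ ⟶ B₁ ⊞ B₂)
      have e' := h5' =≫ (biprod.inr : B₂ ⟶ B₁ ⊞ B₂)
      apply biprod.hom_ext'
      · simpa using e
      · simpa using e'
  id_zero_mem := fun X => (isSplitPair_iff _ _).2
    ⟨𝟙 X, 0, by simp, (isZero_zero C).eq_of_src _ _, by simp, by simp, by simp⟩
  zero_id_mem := fun X => (isSplitPair_iff _ _).2
    ⟨0, 𝟙 X, (isZero_zero C).eq_of_src _ _, by simp, by simp, by simp, by simp⟩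
  pushout_mem := by
    intro A B Z A' i d h t
    obtain ⟨r, s, h1, h2, h3, h4, h5⟩ := (isSplitPair_iff _ _).1 h
    refine ⟨A' ⊞ Z, biprod.lift (r ≫ t) d, biprod.inl, ⟨⟨?_⟩, ⟨?_⟩⟩, Z, biprod.snd,
      A', Z, Iso.refl _, Iso.refl _, Iso.refl _, by simp, by simp⟩
    · ext <;> simp [reassoc_of% h1, h3]
    · refine PushoutCocone.IsColimit.mk _ (fun c => biprod.desc c.inr (s ≫ c.inl)) ?_ ?_ ?_
      · intro c
        have := h5 =≫ c.inl
        simpa [biprod.lift_desc, ← c.condition] using this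
      · intro c
        simp
      · intro c m hm1 hm2
        have e : s ≫ biprod.lift (r ≫ t) d = biprod.inr := by
          ext <;> simp [reassoc_of% h4, h2]
        ext
        · simp [hm2]
        · simp [← hm1, reassoc_of% e]
  pullback_mem := by
    intro A B Z D i d h t
    obtain ⟨r, s, h1, h2, h3, h4, h5⟩ := (isSplitPair_iff _ _).1 h
    refine ⟨A ⊞ D, biprod.desc i (t ≫ s), biprod.snd, ⟨⟨?_⟩, ⟨?_⟩⟩, A, biprod.inl,
      A, D, Iso.refl _, Iso.refl _, Iso.refl _, by simp, by simp⟩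
    · ext <;> simp [h2, h3]
    · refine PullbackCone.IsLimit.mk _ (fun c => biprod.lift (c.fst ≫ r) c.snd) ?_ ?_ ?_
      · intro c
        have := c.fst ≫= h5
        simpa [biprod.lift_desc, ← c.condition_assoc] using this
      · intro c
        simp
      · intro c m hm1 hm2
        have e : biprod.desc i (t ≫ s) ≫ r = biprod.fst := by
          ext <;> simp [h4, h1]
        ext
        · simp [← hm1, e]
        · simp [hm2]

theorem splitWES_le (T : WeaklyExactStructure C) {A B Z : C} {i : A ⟶ B} {d : B ⟶ Z}
    (h : IsSplitPair i d) : T.W i d := by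
  obtain ⟨X, Y, h⟩ := h
  refine T.iso_closed (T.iso_closed (T.sum_mem (T.id_zero_mem X) (T.zero_id_mem Y)) ?_) h
  refine ⟨⟨biprod.fst, biprod.inl, ?_, by simp⟩, Iso.refl _, ⟨biprod.snd, biprod.inr, ?_, by simp⟩,
    ?_, ?_⟩
  · apply biprod.hom_ext'
    · simp
    · exact (isZero_zero C).eq_of_src _ _
  · apply biprod.hom_ext'
    · exact (isZero_zero C).eq_of_src _ _
    · simp
  · apply biprod.hom_ext'
    · simp
    · exact (isZero_zero C).eq_of_src _ _
  · simp

theorem mem_of_pushout (T : WeaklyExactStructure C) {A B Z A' S Z' : C} {i : A ⟶ B} {d : B ⟶ Z}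
    (h : T.W i d) {t : A ⟶ A'} {g : B ⟶ S} {i' : A' ⟶ S} (hp : IsPushout i t g i')
    {d' : S ⟶ Z'} (hk : IsKernelCokernelPair i' d') : T.W i' d' := by
  obtain ⟨S₁, g₁, i₁, hp₁, Z₁, d₁, h₁⟩ := T.pushout_mem h t
  have hk₁ := T.kc_of_mem h₁
  obtain ⟨c⟩ := hk.isCokernel
  obtain ⟨c₁⟩ := hk₁.isCokernel
  let e : S₁ ≅ S := hp₁.isoIsPushout _ _ hp
  have he : i₁ ≫ e.hom = i' := hp₁.inr_isoIsPushout_hom _ _ hp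
  have he' : i' ≫ e.inv = i₁ := by rw [← he]; simp
  obtain ⟨f, hf⟩ := CokernelCofork.IsColimit.desc' c₁ (e.hom ≫ d') (by
    rw [reassoc_of% he, hk.w])
  obtain ⟨f', hf'⟩ := CokernelCofork.IsColimit.desc' c (e.inv ≫ d₁) (by
    rw [reassoc_of% he', hk₁.w])
  change d₁ ≫ f = _ at hf
  change d' ≫ f' = _ at hf'
  refine T.iso_closed h₁ ⟨Iso.refl _, e, ⟨f, f', ?_, ?_⟩, by simp [he], hf⟩
  · apply Cofork.IsColimit.hom_ext c₁
    change d₁ ≫ _ = d₁ ≫ _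
    simp [reassoc_of% hf, hf']
  · apply Cofork.IsColimit.hom_ext c
    change d' ≫ _ = d' ≫ _
    simp [reassoc_of% hf', hf]

theorem mem_of_pullback (T : WeaklyExactStructure C) {A B Z D P A' : C} {i : A ⟶ B} {d : B ⟶ Z}
    (h : T.W i d) {t : D ⟶ Z} {p : P ⟶ B} {q : P ⟶ D} (hp : IsPullback p q d t)
    {j : A' ⟶ P} (hk : IsKernelCokernelPair j q) : T.W j q := by
  obtain ⟨P₁, p₁, q₁, hp₁, A₁, j₁, h₁⟩ := T.pullback_mem h t
  have hk₁ := T.kc_of_mem h₁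
  obtain ⟨c⟩ := hk.isKernel
  obtain ⟨c₁⟩ := hk₁.isKernel
  let e : P₁ ≅ P := hp₁.isoIsPullback _ _ hp
  have he : e.hom ≫ q = q₁ := hp₁.isoIsPullback_hom_snd _ _ hp
  have he' : e.inv ≫ q₁ = q := by rw [← he]; simp
  obtain ⟨f, hf⟩ := KernelFork.IsLimit.lift' c (j₁ ≫ e.hom) (by
    rw [Category.assoc, he, hk₁.w])
  obtain ⟨f', hf'⟩ := KernelFork.IsLimit.lift' c₁ (j ≫ e.inv) (by
    rw [Category.assoc, he', hk.w])
  change f ≫ j = _ at hf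
  change f' ≫ j₁ = _ at hf'
  refine T.iso_closed h₁ ⟨⟨f, f', ?_, ?_⟩, e, Iso.refl _, hf.symm, by simp [he]⟩
  · apply Fork.IsLimit.hom_ext c₁
    change _ ≫ j₁ = _ ≫ j₁
    simp [hf', reassoc_of% hf]
  · apply Fork.IsLimit.hom_ext c
    change _ ≫ j = _ ≫ j
    simp [hf, reassoc_of% hf']

/-- Intersection of a nonempty class of weakly exact structures. -/
def interWES (p : WeaklyExactStructure C → Prop) (hne : ∃ T, p T) : WeaklyExactStructure C where
  W := fun _ _ _ i d => ∀ T, p T → T.W i d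
  kc_of_mem := fun h => by
    obtain ⟨T, hT⟩ := hne
    exact T.kc_of_mem (h T hT)
  iso_closed := fun h e T hT => T.iso_closed (h T hT) e
  sum_mem := fun h h' T hT => T.sum_mem (h T hT) (h' T hT)
  id_zero_mem := fun X T _ => T.id_zero_mem X
  zero_id_mem := fun X T _ => T.zero_id_mem X
  pushout_mem := fun h t => by
    obtain ⟨T, hT⟩ := hne
    obtain ⟨S, g, i', hp, Z', d', h'⟩ := T.pushout_mem (h T hT) t
    exact ⟨S, g, i', hp, Z', d', fun T' hT' => mem_of_pushout T' (h T' hT') hp (T.kc_of_mem h')⟩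
  pullback_mem := fun h t => by
    obtain ⟨T, hT⟩ := hne
    obtain ⟨S, g, i', hp, Z', d', h'⟩ := T.pullback_mem (h T hT) t
    exact ⟨S, g, i', hp, Z', d', fun T' hT' => mem_of_pullback T' (h T' hT') hp (T.kc_of_mem h')⟩

/-- The weakly exact structures contained in a given weakly exact structure `𝒱` form a
complete bounded lattice: nonempty families have meets given by intersection, every family
admits a least upper bound, the split structure is the least element and `𝒱` is the
greatest element. -/
theorem statement13 (𝒱 : WeaklyExactStructure C) :
    (∀ (ι : Type w) [Nonempty ι] (F : ι → WeaklyExactStructure C),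
      (∀ k, WESle (F k) 𝒱) →
      ∃ G : WeaklyExactStructure C, WESle G 𝒱 ∧
        (∀ {A B Z : C} (i : A ⟶ B) (d : B ⟶ Z), G.W i d ↔ ∀ k, (F k).W i d)) ∧
    (∀ (ι : Type w) (F : ι → WeaklyExactStructure C),
      (∀ k, WESle (F k) 𝒱) →
      ∃ S : WeaklyExactStructure C, WESle S 𝒱 ∧ (∀ k, WESle (F k) S) ∧
        (∀ T : WeaklyExactStructure C, WESle T 𝒱 → (∀ k, WESle (F k) T) → WESle S T) ∧
        (∀ {A B Z : C} (i : A ⟶ B) (d : B ⟶ Z),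
          S.W i d ↔ ∀ T : WeaklyExactStructure C,
            WESle T 𝒱 → (∀ k, WESle (F k) T) → T.W i d)) ∧
    (∃ Emin : WeaklyExactStructure C,
      (∀ {A B Z : C} (i : A ⟶ B) (d : B ⟶ Z), Emin.W i d ↔ IsSplitPair i d) ∧
      WESle Emin 𝒱 ∧
      (∀ T : WeaklyExactStructure C, WESle T 𝒱 → WESle Emin T)) ∧
    (∀ T : WeaklyExactStructure C, WESle T 𝒱 → WESle T 𝒱) := by
  refine ⟨?_, ?_, ?_, fun _ h => h⟩
  · intro ι _ F hF
    obtain ⟨k₀⟩ := ‹Nonempty ι›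
    refine ⟨interWES (fun T => ∃ k, F k = T) ⟨_, k₀, rfl⟩, ?_, ?_⟩
    · intro A B Z i d h
      exact hF k₀ i d (h _ ⟨k₀, rfl⟩)
    · intro A B Z i d
      constructor
      · intro h k
        exact h _ ⟨k, rfl⟩
      · rintro h _ ⟨k, rfl⟩
        exact h k
  · intro ι F hF
    refine ⟨interWES (fun T => WESle T 𝒱 ∧ ∀ k, WESle (F k) T)
      ⟨𝒱, fun _ _ _ _ _ h => h, hF⟩, ?_, ?_, ?_, ?_⟩
    · intro A B Z i d h
      exact h 𝒱 ⟨fun _ _ _ _ _ h => h, hF⟩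
    · intro k A B Z i d h T hT
      exact hT.2 k i d h
    · intro T h1 h2 A B Z i d h
      exact h T ⟨h1, h2⟩
    · intro A B Z i d
      exact ⟨fun h T h1 h2 => h T ⟨h1, h2⟩, fun h T hT => h T hT.1 hT.2⟩
  · exact ⟨splitWES C, fun _ _ => Iff.rfl, fun _ _ _ _ _ h => splitWES_le _ h,
      fun T _ _ _ _ _ _ h => splitWES_le T h⟩

end Statement

end WeaklyExactPaper
end
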